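/- arXiv:math/9504209 — 2 statements merged into one kernel-verified Lean document; each statement's English description precedes it below -/
import Mathlib

section
/- Let A, B ∈ SL(2,ℂ) generate a discrete nonelementary subgroup, and suppose A is parabolic. Then for every C ∈ SL(2,ℂ), max{‖C·A·C⁻¹‖², ‖C·B·C⁻¹‖²} ≥ 5/2. (Equivalently, every point x of hyperbolic 3-space is moved hyperbolic distance at least arccosh(5/4) = 0.6931… by A or by B.) -/
open Matrix Real

noncomputable section

abbrev SL2C := Matrix.SpecialLinearGroup (Fin 2) ℂ

/-- The Frobenius (Hilbert–Schmidt) norm of a 2×2 complex matrix. -/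
def fnorm (A : Matrix (Fin 2) (Fin 2) ℂ) : ℝ :=
  @norm _ Matrix.frobeniusSeminormedAddCommGroup.toNorm A

instance : TopologicalSpace SL2C :=
  TopologicalSpace.induced (fun g => (g : Matrix (Fin 2) (Fin 2) ℂ)) inferInstance

/-- A subgroup of `SL(2,ℂ)` is discrete if it is a discrete subspace of `SL(2,ℂ)`. -/
def IsDiscreteSubgroup (Γ : Subgroup SL2C) : Prop := DiscreteTopology Γ

/-- `A` is elliptic of order `n`: `A^n = ±1` but `A^k ≠ ±1` for `1 ≤ k < n`. -/
def IsEllipticOfOrder (A : SL2C) (n : ℕ) : Prop :=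
  (A ^ n = 1 ∨ A ^ n = -1) ∧ ∀ k : ℕ, 1 ≤ k → k < n → A ^ k ≠ 1 ∧ A ^ k ≠ -1

/-- `A` is parabolic: `A ≠ ±1` and `tr A = ±2`. -/
def IsParabolic (A : SL2C) : Prop :=
  A ≠ 1 ∧ A ≠ -1 ∧ (Matrix.trace (A : Matrix (Fin 2) (Fin 2) ℂ) = 2 ∨
    Matrix.trace (A : Matrix (Fin 2) (Fin 2) ℂ) = -2)

/-- `S` and `T` have a common eigenvector in `ℂ²`. -/
def HasCommonEigenvector (S T : SL2C) : Prop :=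
  ∃ v : Fin 2 → ℂ, v ≠ 0 ∧ (∃ a : ℂ, (S : Matrix (Fin 2) (Fin 2) ℂ).mulVec v = a • v) ∧
    (∃ b : ℂ, (T : Matrix (Fin 2) (Fin 2) ℂ).mulVec v = b • v)

/-- A subgroup of `SL(2,ℂ)` is nonelementary if it contains two elements `S`, `T`
with `S^k ≠ ±1 ≠ T^k` for all `k ≥ 1` having no common eigenvector in `ℂ²`. -/
def IsNonelementary (Γ : Subgroup SL2C) : Prop :=
  ∃ S ∈ Γ, ∃ T ∈ Γ, (∀ k : ℕ, 1 ≤ k → S ^ k ≠ 1 ∧ S ^ k ≠ -1) ∧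
    (∀ k : ℕ, 1 ≤ k → T ^ k ≠ 1 ∧ T ^ k ≠ -1) ∧ ¬ HasCommonEigenvector S T

/-- The trace parameter `β(A) = tr²(A) - 4`. -/
def βp (A : SL2C) : ℂ := (Matrix.trace (A : Matrix (Fin 2) (Fin 2) ℂ)) ^ 2 - 4

/-- The commutator parameter `γ(A,B) = tr [A,B] - 2`. -/
def γp (A B : SL2C) : ℂ :=
  Matrix.trace ((A * B * A⁻¹ * B⁻¹ : SL2C) : Matrix (Fin 2) (Fin 2) ℂ) - 2

/-- `PSL(2,ℂ)`, the quotient of `SL(2,ℂ)` by its center `{1, -1}`. -/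
abbrev PSL2C := SL2C ⧸ Subgroup.center SL2C

/-- The image in `PSL(2,ℂ)` of a subgroup of `SL(2,ℂ)`. -/
def pslImage (Γ : Subgroup SL2C) : Subgroup PSL2C :=
  Γ.map (QuotientGroup.mk' (Subgroup.center SL2C))

open Classical in
/-- `t5`: the unique real `t > 1` with
`t (t - cos²(π/5)) + (t-1) √((t+1)(t+1-2 cos²(π/5))) = 1/2`. -/
def t5 : ℝ :=
  if h : ∃ t : ℝ, 1 < t ∧
      t * (t - Real.cos (π / 5) ^ 2) +
        (t - 1) * Real.sqrt ((t + 1) * (t + 1 - 2 * Real.cos (π / 5) ^ 2)) = 1 / 2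
  then h.choose else 0

/-- The value `t n = cosh (c n)` where `c n` is the sharp displacement bound for
discrete nonelementary groups with an elliptic generator of order `n ≥ 3`. -/
def tOf : ℕ → ℝ
  | 3 => (2 * Real.sqrt (8 + 2 * Real.sqrt 5) - (1 + Real.sqrt 5)) / (6 - Real.sqrt 5)
  | 4 => (Real.sqrt (6 + 2 * Real.sqrt 3) - Real.sqrt 3) / (3 - Real.sqrt 3)
  | 5 => t5
  | 6 => 17 / 16
  | n => (5 - 2 * Real.sin (π / n) ^ 2) / (4 + 2 * Real.sin (π / n) ^ 2)

/-!
The commutator parameter `γ(A,B) = tr [A,B] - 2` is invariant under simultaneous conjugation. If `A`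
is parabolic, then `γ(A, BAB⁻¹) = γ(A,B)²`; so if `0 < |γ(A,B)| < 1`, the Shimizu–Leutbecher
sequence `B₀ = B`, `Bₙ₊₁ = Bₙ A Bₙ⁻¹` has `γ(A,Bₙ) → 0` without ever vanishing. After a
triangularization of `A` the entries of `Bₙ` satisfy affine recurrences which force `Bₙ → A`,
contradicting discreteness. Hence `|γ(A,B)| ≥ 1`.

On the other hand, a unitary conjugation preserves the Frobenius norm and brings `A` to the form
`(e, w; 0, e)` with `e² = 1`. If `c` is the lower left entry of `B`, then `γ(A,B) = (wc)²` and
`‖A‖² = 2 + |w|²`, while `det B = 1` gives `‖B‖² ≥ |c|² + |c|⁻²` as soon as `|c| ≥ 1`. If both norms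
squared were below `5/2`, then `|w|² < 1/2` and `|c|² < 2`, so that `|γ(A,B)| < 1`.
-/

open Filter Topology MatrixGroups
open Matrix.SpecialLinearGroup (coe_mul coe_inv coe_one)

section ShimizuSequence

variable {G H : Type*} [Group G] [Group H]

/-- The Shimizu–Leutbecher sequence `B₀ = B`, `Bₙ₊₁ = Bₙ A Bₙ⁻¹`. -/
def shimizuSeq (A B : G) : ℕ → G
  | 0 => B
  | n + 1 => shimizuSeq A B n * A * (shimizuSeq A B n)⁻¹

lemma shimizuSeq_mem {Γ : Subgroup G} {A B : G} (hA : A ∈ Γ) (hB : B ∈ Γ) :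
    ∀ n, shimizuSeq A B n ∈ Γ
  | 0 => hB
  | n + 1 => mul_mem (mul_mem (shimizuSeq_mem hA hB n) hA) (inv_mem (shimizuSeq_mem hA hB n))

lemma map_shimizuSeq (f : G →* H) (A B : G) :
    ∀ n, f (shimizuSeq A B n) = shimizuSeq (f A) (f B) n
  | 0 => rfl
  | n + 1 => by simp only [shimizuSeq, map_mul, map_inv, map_shimizuSeq f A B n]

end ShimizuSequence

lemma tendsto_of_affine_recurrence {R : Type*} [SeminormedRing R] {u a : ℕ → R} {e : R}
    (hu : Tendsto u atTop (𝓝 0)) (ha : ∀ n, a (n + 1) = e + u n * a n) :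
    Tendsto a atTop (𝓝 e) := by
  have bounded : ∃ M, ∀ᶠ n in atTop, ‖a n‖ ≤ M := by
    obtain ⟨N, hN⟩ := eventually_atTop.1
      (hu.norm.eventually_le_const (u := 1 / 2) (by simp : ‖(0 : R)‖ < 1 / 2))
    refine ⟨max ‖a N‖ (2 * ‖e‖), eventually_atTop.2 ⟨N, fun n hn => ?_⟩⟩
    induction n, hn using Nat.le_induction with
    | base => exact le_max_left _ _
    | succ n hn ih =>
      calc ‖a (n + 1)‖ ≤ ‖e‖ + ‖u n‖ * ‖a n‖ := by
            rw [ha]; exact norm_add_le_of_le le_rfl (norm_mul_le _ _)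
        _ ≤ ‖e‖ + 1 / 2 * max ‖a N‖ (2 * ‖e‖) := by gcongr; exact hN n hn
        _ ≤ max ‖a N‖ (2 * ‖e‖) := by linarith [le_max_right ‖a N‖ (2 * ‖e‖)]
  obtain ⟨M, hM⟩ := bounded
  have hua := hu.zero_mul_isBoundedUnder_le (isBoundedUnder_of_eventually_le hM)
  rw [← tendsto_add_atTop_iff_nat 1]
  simpa only [ha, add_zero] using hua.const_add e

lemma exists_norm_eq_one_and_apply_eq_smul {E : Type*} [NormedAddCommGroup E] [NormedSpace ℂ E]
    [FiniteDimensional ℂ E] [Nontrivial E] (f : E →ₗ[ℂ] E) :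
    ∃ v : E, ‖v‖ = 1 ∧ ∃ a : ℂ, f v = a • v := by
  obtain ⟨a, ha⟩ := Module.End.exists_eigenvalue f
  obtain ⟨v, hv⟩ := ha.exists_hasEigenvector
  refine ⟨(‖v‖⁻¹ : ℂ) • v, norm_smul_inv_norm hv.2, a, ?_⟩
  rw [map_smul, hv.apply_eq_smul, smul_comm]

section SpecialLinearGroup

variable {R : Type*} [CommRing R]

lemma apply_one_zero_eq_zero_iff (M : Matrix (Fin 2) (Fin 2) R) :
    M 1 0 = 0 ↔ ∃ a : R, M *ᵥ ![1, 0] = a • ![1, 0] := by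
  constructor
  · intro h
    refine ⟨M 0 0, ?_⟩
    ext i
    fin_cases i <;> simp [mulVec, dotProduct, h]
  · rintro ⟨a, ha⟩
    simpa [mulVec, dotProduct] using congrFun ha 1

lemma conj_apply_one_zero_eq_zero_iff (C X : SL(2, R)) :
    (C * X * C⁻¹) 1 0 = 0 ↔ ∃ a : R, (X : Matrix (Fin 2) (Fin 2) R) *ᵥ
      (((C⁻¹ : SL(2, R)) : Matrix (Fin 2) (Fin 2) R) *ᵥ ![1, 0]) =
        a • (((C⁻¹ : SL(2, R)) : Matrix (Fin 2) (Fin 2) R) *ᵥ ![1, 0]) := by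
  rw [apply_one_zero_eq_zero_iff]
  refine exists_congr fun a => ⟨fun h => ?_, fun h => ?_⟩
  · rw [← mulVec_smul, ← h, mulVec_mulVec, mulVec_mulVec, ← coe_mul, ← coe_mul, mul_assoc,
      inv_mul_cancel_left]
  · rw [coe_mul, coe_mul, Matrix.mul_assoc, ← mulVec_mulVec, ← mulVec_mulVec, h, mulVec_smul,
      mulVec_mulVec, ← coe_mul, mul_inv_cancel, coe_one, one_mulVec]

lemma mul_sub_mul_eq_one (A : SL(2, R)) : A 0 0 * A 1 1 - A 0 1 * A 1 0 = 1 := by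
  rw [← det_fin_two, A.det_coe]

/-- The trace of an element of `SL(2,R)`; defined on the group itself so that trace identities for
products and inverses carry no coercions. -/
def sl2Trace (A : SL(2, R)) : R := Matrix.trace (A : Matrix (Fin 2) (Fin 2) R)

lemma sl2Trace_eq (A : SL(2, R)) : sl2Trace A = A 0 0 + A 1 1 :=
  Matrix.trace_fin_two _

lemma sl2Trace_one : sl2Trace (1 : SL(2, R)) = 2 := by
  simp [sl2Trace]

lemma sl2Trace_conj (C A : SL(2, R)) : sl2Trace (C * A * C⁻¹) = sl2Trace A := by
  have h : sl2Trace (C * A * C⁻¹) = sl2Trace (C⁻¹ * (C * A)) := Matrix.trace_mul_comm _ _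
  rw [h, inv_mul_cancel_left]

lemma sl2Trace_mul_inv (A B : SL(2, R)) :
    sl2Trace (A * B⁻¹) = sl2Trace A * sl2Trace B - sl2Trace (A * B) := by
  simp only [sl2Trace_eq, coe_mul, coe_inv, adjugate_fin_two, mul_apply, Fin.sum_univ_two,
    of_apply, cons_val', cons_val_zero, cons_val_one, cons_val_fin_one]
  ring

lemma sl2Trace_mul_self (A : SL(2, R)) : sl2Trace (A * A) = sl2Trace A ^ 2 - 2 := by
  have h := sl2Trace_mul_inv A A
  rw [mul_inv_cancel, sl2Trace_one] at h
  linear_combination h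

end SpecialLinearGroup

section FrobeniusNorm

lemma fnorm_sq (M : Matrix (Fin 2) (Fin 2) ℂ) :
    fnorm M ^ 2 = ‖M 0 0‖ ^ 2 + ‖M 0 1‖ ^ 2 + ‖M 1 0‖ ^ 2 + ‖M 1 1‖ ^ 2 := by
  rw [fnorm, frobenius_norm_def, ← Real.sqrt_eq_rpow, Real.sq_sqrt (by positivity)]
  simp only [Fin.sum_univ_two, Real.rpow_two]
  ring

lemma fnorm_sq_eq_trace (M : Matrix (Fin 2) (Fin 2) ℂ) :
    ((fnorm M ^ 2 : ℝ) : ℂ) = trace (M * star M) := by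
  rw [fnorm_sq]
  simp only [trace_fin_two, mul_apply, Fin.sum_univ_two, star_apply]
  push_cast
  simp only [← Complex.mul_conj', RCLike.star_def]
  ring

lemma fnorm_unitary_conj {U : Matrix (Fin 2) (Fin 2) ℂ} (hU : U ∈ unitaryGroup (Fin 2) ℂ)
    (M : Matrix (Fin 2) (Fin 2) ℂ) : fnorm (U * M * star U) ^ 2 = fnorm M ^ 2 := by
  have hUU : star U * U = 1 := mem_unitaryGroup_iff'.1 hU
  rw [← Complex.ofReal_inj, fnorm_sq_eq_trace, fnorm_sq_eq_trace]
  calc trace (U * M * star U * star (U * M * star U))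
      = trace (U * (M * (star U * U) * star M) * star U) := by
        simp only [star_mul, star_star, Matrix.mul_assoc]
    _ = trace (M * star M) := by
        rw [hUU, Matrix.mul_one, trace_mul_cycle, hUU, Matrix.one_mul]

end FrobeniusNorm

namespace SL2C

instance : IsTopologicalGroup SL2C := SpecialLinearGroup.topologicalGroup

lemma tendsto_nhds_iff {ι : Type*} {l : Filter ι} {X : ι → SL2C} {A : SL2C} :
    Tendsto X l (𝓝 A) ↔ ∀ i j, Tendsto (fun n => X n i j) l (𝓝 (A i j)) :=
  IsInducing.subtypeVal.tendsto_nhds_iff.trans <|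
    tendsto_pi_nhds.trans (forall_congr' fun _ => tendsto_pi_nhds)

lemma βp_eq_sl2Trace (A : SL2C) : βp A = sl2Trace A ^ 2 - 4 := rfl

lemma γp_eq_sl2Trace (A B : SL2C) : γp A B = sl2Trace (A * B * A⁻¹ * B⁻¹) - 2 := rfl

lemma βp_conj (C A : SL2C) : βp (C * A * C⁻¹) = βp A := by
  simp only [βp_eq_sl2Trace, sl2Trace_conj]

lemma γp_conj (C A B : SL2C) : γp (C * A * C⁻¹) (C * B * C⁻¹) = γp A B := by
  simp only [γp_eq_sl2Trace, conj_inv, conj_mul, sl2Trace_conj]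

lemma γp_self (A : SL2C) : γp A A = 0 := by
  rw [γp_eq_sl2Trace, mul_inv_cancel_right, mul_inv_cancel, sl2Trace_one, sub_self]

lemma γp_eq_sl2Trace_mul_conj (A X : SL2C) :
    γp A X = sl2Trace A ^ 2 - sl2Trace (A * (X * A * X⁻¹)) - 2 := by
  have h := sl2Trace_mul_inv A (X * A * X⁻¹)
  rw [conj_inv, sl2Trace_conj] at h
  rw [γp_eq_sl2Trace, mul_assoc, mul_assoc, ← mul_assoc X, h]
  ring

lemma γp_conj_self (A X : SL2C) : γp A (X * A * X⁻¹) = γp A X * (γp A X - βp A) := by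
  set Y := X * A * X⁻¹
  have trace_Y : sl2Trace Y = sl2Trace A := sl2Trace_conj X A
  have trace_AYA : sl2Trace (A * Y * A) = sl2Trace A * sl2Trace (A * Y) - sl2Trace A := by
    have h := sl2Trace_mul_inv (A * Y) A
    rw [sl2Trace_conj, trace_Y] at h
    linear_combination h
  have trace_AYAY : sl2Trace (A * Y * A * Y) = sl2Trace (A * Y) ^ 2 - 2 := by
    rw [mul_assoc _ A Y, sl2Trace_mul_self]
  have γ_AX : γp A X = sl2Trace A ^ 2 - sl2Trace (A * Y) - 2 := γp_eq_sl2Trace_mul_conj A X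
  have γ_AY : γp A Y = sl2Trace A ^ 2 - sl2Trace (A * Y * A * Y⁻¹) - 2 := by
    rw [γp_eq_sl2Trace_mul_conj, ← mul_assoc, ← mul_assoc]
  rw [γ_AY, γ_AX, βp_eq_sl2Trace, sl2Trace_mul_inv, trace_AYA, trace_AYAY, trace_Y]
  ring

lemma γp_shimizuSeq {A : SL2C} (hβ : βp A = 0) (B : SL2C) :
    ∀ n, γp A (shimizuSeq A B n) = γp A B ^ 2 ^ n
  | 0 => by rw [pow_zero, pow_one, shimizuSeq]
  | n + 1 => by
    rw [shimizuSeq, γp_conj_self, γp_shimizuSeq hβ B n, hβ, sub_zero, ← sq, ← pow_mul,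
      ← pow_succ]

section Triangular

variable {A : SL2C} (hβ : βp A = 0) (h10 : A 1 0 = 0)

include hβ h10

lemma apply_one_one_of_triangular : A 1 1 = A 0 0 := by
  have hdet := mul_sub_mul_eq_one A
  rw [βp_eq_sl2Trace, sl2Trace_eq] at hβ
  rw [h10] at hdet
  have h : (A 1 1 - A 0 0) ^ 2 = 0 := by linear_combination hβ - 4 * hdet
  exact sub_eq_zero.1 ((pow_eq_zero_iff two_ne_zero).1 h)

lemma apply_zero_zero_sq_of_triangular : A 0 0 ^ 2 = 1 := by
  have hdet := mul_sub_mul_eq_one A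
  rw [apply_one_one_of_triangular hβ h10, h10] at hdet
  linear_combination hdet

lemma fnorm_sq_of_triangular : fnorm A ^ 2 = 2 + ‖A 0 1‖ ^ 2 := by
  have norm_sq_eq_one : ‖A 0 0‖ ^ 2 = 1 := by
    rw [← norm_pow, apply_zero_zero_sq_of_triangular hβ h10, norm_one]
  rw [fnorm_sq, apply_one_one_of_triangular hβ h10, h10, norm_sq_eq_one, norm_zero]
  ring

lemma coe_conj_of_triangular (X : SL2C) :
    ((X * A * X⁻¹ : SL2C) : Matrix (Fin 2) (Fin 2) ℂ) =
      !![A 0 0 - A 0 1 * X 0 0 * X 1 0, A 0 1 * X 0 0 ^ 2;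
        -(A 0 1 * X 1 0 ^ 2), A 0 0 + A 0 1 * X 0 0 * X 1 0] := by
  have hdet := mul_sub_mul_eq_one X
  have h11 := apply_one_one_of_triangular hβ h10
  ext i j
  fin_cases i <;> fin_cases j <;>
    simp only [Fin.isValue, Fin.zero_eta, Fin.mk_one, coe_mul, coe_inv, adjugate_fin_two,
      mul_apply, Fin.sum_univ_two, of_apply, cons_val', cons_val_zero, cons_val_one,
      cons_val_fin_one, h10, h11] <;>
    grind

lemma γp_eq_sq_of_triangular (B : SL2C) : γp A B = (A 0 1 * B 1 0) ^ 2 := by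
  have h11 := apply_one_one_of_triangular hβ h10
  have hdet := apply_zero_zero_sq_of_triangular hβ h10
  have trace_mul : sl2Trace (A * (B * A * B⁻¹)) = 2 - (A 0 1 * B 1 0) ^ 2 := by
    simp only [sl2Trace_eq, coe_mul A, coe_conj_of_triangular hβ h10, mul_apply, Fin.sum_univ_two,
      h10, h11, of_apply, cons_val', cons_val_zero, cons_val_one, cons_val_fin_one]
    grind
  rw [γp_eq_sl2Trace_mul_conj, trace_mul, sl2Trace_eq, h11]
  linear_combination 4 * hdet

lemma tendsto_mul_shimizuSeq_of_triangular {B : SL2C} (hγ : ‖γp A B‖ < 1) :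
    Tendsto (fun n => A 0 1 * shimizuSeq A B n 1 0) atTop (𝓝 0) := by
  have sq_tendsto : Tendsto (fun n => (A 0 1 * shimizuSeq A B n 1 0) ^ 2) atTop (𝓝 0) := by
    simp only [← γp_eq_sq_of_triangular hβ h10, γp_shimizuSeq hβ]
    exact (tendsto_pow_atTop_nhds_zero_of_norm_lt_one hγ).comp
      (tendsto_pow_atTop_atTop_of_one_lt one_lt_two)
  rw [tendsto_zero_iff_norm_tendsto_zero] at sq_tendsto ⊢
  simpa only [norm_pow, Real.sqrt_sq (norm_nonneg _), Real.sqrt_zero] using sq_tendsto.sqrt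

lemma tendsto_shimizuSeq_of_triangular {B : SL2C} (hγ : ‖γp A B‖ < 1) :
    Tendsto (shimizuSeq A B) atTop (𝓝 A) := by
  set X := shimizuSeq A B
  have X_succ (n : ℕ) : (X (n + 1) : Matrix (Fin 2) (Fin 2) ℂ) =
      !![A 0 0 + -(A 0 1 * X n 1 0) * X n 0 0, A 0 1 * X n 0 0 ^ 2;
        0 + -(A 0 1 * X n 1 0) * X n 1 0, A 0 0 + A 0 1 * X n 1 0 * X n 0 0] := by
    refine (coe_conj_of_triangular hβ h10 (X n)).trans ?_
    ring_nf
  have hu : Tendsto (fun n => A 0 1 * X n 1 0) atTop (𝓝 0) :=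
    tendsto_mul_shimizuSeq_of_triangular hβ h10 hγ
  have hu_neg : Tendsto (fun n => -(A 0 1 * X n 1 0)) atTop (𝓝 0) := by
    simpa only [neg_zero] using hu.neg
  have X_zero_zero : Tendsto (fun n => X n 0 0) atTop (𝓝 (A 0 0)) :=
    tendsto_of_affine_recurrence hu_neg fun n => by simp [X_succ]
  have X_one_zero : Tendsto (fun n => X n 1 0) atTop (𝓝 (A 1 0)) :=
    h10 ▸ tendsto_of_affine_recurrence hu_neg fun n => by simp [X_succ]
  have X_zero_one : Tendsto (fun n => X (n + 1) 0 1) atTop (𝓝 (A 0 1)) := by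
    simpa [X_succ, apply_zero_zero_sq_of_triangular hβ h10] using
      (X_zero_zero.pow 2).const_mul (A 0 1)
  have X_one_one : Tendsto (fun n => X (n + 1) 1 1) atTop (𝓝 (A 1 1)) := by
    simpa [X_succ, apply_one_one_of_triangular hβ h10] using (hu.mul X_zero_zero).const_add (A 0 0)
  rw [← tendsto_add_atTop_iff_nat 1] at X_zero_zero X_one_zero ⊢
  refine tendsto_nhds_iff.2 fun i j => ?_
  fin_cases i <;> fin_cases j
  exacts [X_zero_zero, X_zero_one, X_one_zero, X_one_one]

end Triangular

section UnitaryTriangularization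

lemma exists_unitary_inv_mulVec_eq {v : EuclideanSpace ℂ (Fin 2)} (hv : ‖v‖ = 1) :
    ∃ U : SL2C, (U : Matrix (Fin 2) (Fin 2) ℂ) ∈ unitaryGroup (Fin 2) ℂ ∧
      ((U⁻¹ : SL2C) : Matrix (Fin 2) (Fin 2) ℂ) *ᵥ ![1, 0] = v := by
  have det_eq_one : det !![star (v 0), star (v 1); -v 1, v 0] = 1 := by
    have h := EuclideanSpace.norm_sq_eq v
    rw [hv, one_pow, Fin.sum_univ_two] at h
    simp only [det_fin_two_of, mul_neg, sub_neg_eq_add, RCLike.star_def, Complex.conj_mul']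
    exact_mod_cast h.symm
  obtain ⟨U, hU⟩ : ∃ U : SL2C, (U : Matrix (Fin 2) (Fin 2) ℂ) =
      !![star (v 0), star (v 1); -v 1, v 0] := ⟨⟨_, det_eq_one⟩, rfl⟩
  have inv_eq : ((U⁻¹ : SL2C) : Matrix (Fin 2) (Fin 2) ℂ) =
      !![v 0, -star (v 1); v 1, star (v 0)] := by
    rw [coe_inv, hU, adjugate_fin_two_of, neg_neg]
  have star_eq : star (U : Matrix (Fin 2) (Fin 2) ℂ) = (U⁻¹ : SL2C) := by
    rw [hU, inv_eq]
    ext i j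
    fin_cases i <;> fin_cases j <;> simp
  refine ⟨U, ?_, ?_⟩
  · rw [mem_unitaryGroup_iff, star_eq, ← coe_mul, mul_inv_cancel, coe_one]
  · rw [inv_eq]
    ext i
    fin_cases i <;> simp

lemma exists_unitary_conj_apply_one_zero_eq_zero (A : SL2C) :
    ∃ U : SL2C, (U : Matrix (Fin 2) (Fin 2) ℂ) ∈ unitaryGroup (Fin 2) ℂ ∧
      (U * A * U⁻¹) 1 0 = 0 := by
  obtain ⟨v, hv, a, hav⟩ :=
    exists_norm_eq_one_and_apply_eq_smul (toEuclideanLin (A : Matrix (Fin 2) (Fin 2) ℂ))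
  obtain ⟨U, hU, hUv⟩ := exists_unitary_inv_mulVec_eq hv
  refine ⟨U, hU, (conj_apply_one_zero_eq_zero_iff U A).2 ⟨a, ?_⟩⟩
  rw [hUv]
  exact congrArg WithLp.ofLp hav

lemma coe_inv_of_mem_unitaryGroup {U : SL2C}
    (hU : (U : Matrix (Fin 2) (Fin 2) ℂ) ∈ unitaryGroup (Fin 2) ℂ) :
    ((U⁻¹ : SL2C) : Matrix (Fin 2) (Fin 2) ℂ) = star (U : Matrix (Fin 2) (Fin 2) ℂ) := by
  refine (left_inv_eq_right_inv (mem_unitaryGroup_iff'.1 hU) ?_).symm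
  rw [← coe_mul, mul_inv_cancel, coe_one]

lemma fnorm_conj_of_mem_unitaryGroup {U : SL2C}
    (hU : (U : Matrix (Fin 2) (Fin 2) ℂ) ∈ unitaryGroup (Fin 2) ℂ) (M : SL2C) :
    fnorm (U * M * U⁻¹ : SL2C) ^ 2 = fnorm M ^ 2 := by
  rw [coe_mul, coe_mul, coe_inv_of_mem_unitaryGroup hU, fnorm_unitary_conj hU]

end UnitaryTriangularization

lemma tendsto_shimizuSeq {A B : SL2C} (hβ : βp A = 0) (hγ : ‖γp A B‖ < 1) :
    Tendsto (shimizuSeq A B) atTop (𝓝 A) := by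
  obtain ⟨U, -, hU⟩ := exists_unitary_conj_apply_one_zero_eq_zero A
  have conj_tendsto : Tendsto (fun n => U * shimizuSeq A B n * U⁻¹) atTop (𝓝 (U * A * U⁻¹)) := by
    have h := tendsto_shimizuSeq_of_triangular (B := U * B * U⁻¹)
      ((βp_conj U A).trans hβ) hU (by rwa [γp_conj])
    exact h.congr fun n => (map_shimizuSeq (MulAut.conj U).toMonoidHom A B n).symm
  simpa [mul_assoc] using (conj_tendsto.const_mul U⁻¹).mul_const U

lemma one_le_norm_γp {Γ : Subgroup SL2C} (hΓ : IsDiscreteSubgroup Γ) {A B : SL2C} (hA : A ∈ Γ)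
    (hB : B ∈ Γ) (hβ : βp A = 0) (hγ : γp A B ≠ 0) : 1 ≤ ‖γp A B‖ := by
  by_contra! hlt
  have : DiscreteTopology Γ := hΓ
  have tendsto_Γ : Tendsto (fun n => (⟨shimizuSeq A B n, shimizuSeq_mem hA hB n⟩ : Γ)) atTop
      (𝓝 ⟨A, hA⟩) :=
    tendsto_subtype_rng.2 (tendsto_shimizuSeq hβ hlt)
  rw [nhds_discrete, tendsto_pure] at tendsto_Γ
  obtain ⟨n, hn⟩ := tendsto_Γ.exists
  have γ_n := γp_shimizuSeq hβ B n
  rw [show shimizuSeq A B n = A from congrArg Subtype.val hn, γp_self] at γ_n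
  exact pow_ne_zero _ hγ γ_n.symm

lemma sq_add_inv_sq_le_fnorm_sq {A : SL2C} (h : 1 ≤ ‖A 1 0‖) :
    ‖A 1 0‖ ^ 2 + (‖A 1 0‖ ^ 2)⁻¹ ≤ fnorm A ^ 2 := by
  have hdet : 1 ≤ ‖A 0 0‖ * ‖A 1 1‖ + ‖A 0 1‖ * ‖A 1 0‖ := by
    simpa only [mul_sub_mul_eq_one A, norm_one, norm_mul] using
      norm_sub_le (A 0 0 * A 1 1) (A 0 1 * A 1 0)
  suffices (‖A 1 0‖ ^ 2)⁻¹ ≤ ‖A 0 0‖ ^ 2 + ‖A 0 1‖ ^ 2 + ‖A 1 1‖ ^ 2 by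
    rw [fnorm_sq]; linarith
  rw [inv_le_iff_one_le_mul₀ (by positivity)]
  obtain ⟨s, hs⟩ : ∃ s, s = ‖A 0 0‖ ^ 2 + ‖A 1 1‖ ^ 2 := ⟨_, rfl⟩
  have sum_eq : s * ‖A 1 0‖ ^ 2 + (‖A 0 1‖ * ‖A 1 0‖) ^ 2 =
      (‖A 0 0‖ ^ 2 + ‖A 0 1‖ ^ 2 + ‖A 1 1‖ ^ 2) * ‖A 1 0‖ ^ 2 := by rw [hs]; ring
  have hs0 : 0 ≤ s := hs ▸ by positivity
  have le_s_mul : s ≤ s * ‖A 1 0‖ ^ 2 := le_mul_of_one_le_right hs0 (one_le_pow₀ h)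
  rw [← sum_eq]
  rcases le_total 1 s with hs1 | hs1
  · exact (hs1.trans le_s_mul).trans (le_add_of_nonneg_right (sq_nonneg _))
  · have sub_le : 1 - s / 2 ≤ ‖A 0 1‖ * ‖A 1 0‖ := by
      linarith [two_mul_le_add_sq ‖A 0 0‖ ‖A 1 1‖]
    calc 1 ≤ s + (1 - s / 2) ^ 2 := by linarith [sq_nonneg (s / 2)]
      _ ≤ s * ‖A 1 0‖ ^ 2 + (‖A 0 1‖ * ‖A 1 0‖) ^ 2 := by
        gcongr
        linarith

lemma norm_apply_one_zero_sq_lt_two {A : SL2C} (h : fnorm A ^ 2 < 5 / 2) : ‖A 1 0‖ ^ 2 < 2 := by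
  by_contra! hc
  have one_le : 1 ≤ ‖A 1 0‖ := (one_le_sq_iff₀ (norm_nonneg _)).1 (by linarith)
  have hlt : ‖A 1 0‖ ^ 2 + (‖A 1 0‖ ^ 2)⁻¹ < 5 / 2 := (sq_add_inv_sq_le_fnorm_sq one_le).trans_lt h
  have hinv : ‖A 1 0‖ ^ 2 * (‖A 1 0‖ ^ 2)⁻¹ = 1 := mul_inv_cancel₀ (by positivity)
  nlinarith

lemma norm_γp_lt_one {A B : SL2C} (hβ : βp A = 0)
    (hA : fnorm A ^ 2 < 5 / 2) (hB : fnorm B ^ 2 < 5 / 2) : ‖γp A B‖ < 1 := by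
  obtain ⟨U, hU, h10⟩ := exists_unitary_conj_apply_one_zero_eq_zero A
  rw [← βp_conj U] at hβ
  rw [← fnorm_conj_of_mem_unitaryGroup hU] at hA hB
  rw [fnorm_sq_of_triangular hβ h10] at hA
  have hc := norm_apply_one_zero_sq_lt_two hB
  rw [← γp_conj U, γp_eq_sq_of_triangular hβ h10, norm_pow, norm_mul, mul_pow]
  nlinarith [sq_nonneg ‖(U * B * U⁻¹) 1 0‖]

end SL2C

/-- The elements of `SL(2,ℂ)` that map `v` to a multiple of itself. -/
def eigenvectorSubgroup (v : Fin 2 → ℂ) : Subgroup SL2C where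
  carrier := {X | ∃ a : ℂ, (X : Matrix (Fin 2) (Fin 2) ℂ) *ᵥ v = a • v}
  one_mem' := ⟨1, by simp⟩
  mul_mem' := by
    rintro X Y ⟨a, ha⟩ ⟨b, hb⟩
    exact ⟨b * a, by rw [coe_mul, ← mulVec_mulVec, hb, mulVec_smul, ha, smul_smul]⟩
  inv_mem' := by
    rintro X ⟨a, ha⟩
    have h : v = a • ((X⁻¹ : SL2C) : Matrix (Fin 2) (Fin 2) ℂ) *ᵥ v := by
      rw [← mulVec_smul, ← ha, mulVec_mulVec, ← coe_mul, inv_mul_cancel, coe_one, one_mulVec]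
    rcases eq_or_ne a 0 with rfl | ha0
    · rw [zero_smul] at h
      exact ⟨0, by rw [h, mulVec_zero, smul_zero]⟩
    · exact ⟨a⁻¹, ((inv_smul_eq_iff₀ ha0).2 h).symm⟩

lemma HasCommonEigenvector.of_mem_closure {A B S T : SL2C} (h : HasCommonEigenvector A B)
    (hS : S ∈ Subgroup.closure {A, B}) (hT : T ∈ Subgroup.closure {A, B}) :
    HasCommonEigenvector S T := by
  obtain ⟨v, hv, hA, hB⟩ := h
  have closure_le : Subgroup.closure {A, B} ≤ eigenvectorSubgroup v :=
    (Subgroup.closure_le _).2 (Set.pair_subset hA hB)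
  exact ⟨v, hv, closure_le hS, closure_le hT⟩

lemma IsNonelementary.not_hasCommonEigenvector {A B : SL2C}
    (h : IsNonelementary (Subgroup.closure {A, B})) : ¬ HasCommonEigenvector A B := by
  obtain ⟨S, hS, T, hT, -, -, hST⟩ := h
  exact fun hAB => hST (hAB.of_mem_closure hS hT)

lemma HasCommonEigenvector.of_conj_apply_one_zero_eq_zero {C A B : SL2C}
    (hA : (C * A * C⁻¹) 1 0 = 0) (hB : (C * B * C⁻¹) 1 0 = 0) : HasCommonEigenvector A B := by
  refine ⟨_, fun h => ?_, (conj_apply_one_zero_eq_zero_iff C A).1 hA,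
    (conj_apply_one_zero_eq_zero_iff C B).1 hB⟩
  have h_one : ![(1 : ℂ), 0] = 0 := by
    rw [← one_mulVec ![(1 : ℂ), 0], ← coe_one, ← mul_inv_cancel C, coe_mul, ← mulVec_mulVec, h,
      mulVec_zero]
  exact one_ne_zero (congrFun h_one 0)

lemma HasCommonEigenvector.of_γp_eq_zero {A B : SL2C} (hβ : βp A = 0) (hγ : γp A B = 0) :
    HasCommonEigenvector A B := by
  obtain ⟨U, -, hUA⟩ := SL2C.exists_unitary_conj_apply_one_zero_eq_zero A
  rw [← SL2C.βp_conj U] at hβ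
  rw [← SL2C.γp_conj U, SL2C.γp_eq_sq_of_triangular hβ hUA, sq_eq_zero_iff, mul_eq_zero] at hγ
  rcases hγ with hw | hUB
  · obtain ⟨V, -, hVB⟩ := SL2C.exists_unitary_conj_apply_one_zero_eq_zero B
    refine .of_conj_apply_one_zero_eq_zero ?_ hVB
    have h := SL2C.coe_conj_of_triangular hβ hUA (V * U⁻¹)
    rw [show V * U⁻¹ * (U * A * U⁻¹) * (V * U⁻¹)⁻¹ = V * A * V⁻¹ by group] at h
    simp [h, hw]
  · exact .of_conj_apply_one_zero_eq_zero hUA hUB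

lemma IsParabolic.βp_eq_zero {A : SL2C} (hA : IsParabolic A) : βp A = 0 := by
  obtain ⟨-, -, h | h⟩ := hA <;> rw [βp, h] <;> norm_num

/-- Theorem 1.18: the sharp displacement bound `arccosh (5/4)` for discrete
nonelementary two-generator groups with a parabolic generator. -/
theorem margulis_parabolic (A B : SL2C)
    (hd : IsDiscreteSubgroup (Subgroup.closure {A, B}))
    (hne : IsNonelementary (Subgroup.closure {A, B}))
    (hA : IsParabolic A) :
    ∀ C : SL2C,
      max (fnorm ((C * A * C⁻¹ : SL2C) : Matrix (Fin 2) (Fin 2) ℂ) ^ 2)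
      (fnorm ((C * B * C⁻¹ : SL2C) : Matrix (Fin 2) (Fin 2) ℂ) ^ 2) ≥ 5 / 2 := by
  intro C
  have hβ : βp A = 0 := hA.βp_eq_zero
  have hγ : γp A B ≠ 0 := fun h => hne.not_hasCommonEigenvector (.of_γp_eq_zero hβ h)
  have one_le : 1 ≤ ‖γp A B‖ :=
    SL2C.one_le_norm_γp hd (Subgroup.subset_closure (Set.mem_insert A {B}))
      (Subgroup.subset_closure (Set.mem_insert_of_mem A rfl)) hβ hγ
  by_contra! hlt
  obtain ⟨hCA, hCB⟩ := max_lt_iff.1 hlt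
  have lt_one : ‖γp (C * A * C⁻¹) (C * B * C⁻¹)‖ < 1 :=
    SL2C.norm_γp_lt_one ((SL2C.βp_conj C A).trans hβ) hCA hCB
  rw [SL2C.γp_conj] at lt_one
  exact lt_one.not_ge one_le

end
end

section
/- (Yamada's theorem; the Margulis constant for Fuchsian groups.) If A, B ∈ SL(2,ℝ) generate a discrete nonelementary subgroup of SL(2,ℝ), then for every z in the upper half plane ℍ, max{dist(A • z, z), dist(B • z, z)} ≥ 2·arsinh(√((2cos(2π/7) − 1)/(8cos(π/7) + 7))) = 0.2629… . -/
open Matrix Real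

noncomputable section

abbrev SL2R := Matrix.SpecialLinearGroup (Fin 2) ℝ

instance : TopologicalSpace SL2R :=
  TopologicalSpace.induced (fun g => (g : Matrix (Fin 2) (Fin 2) ℝ)) inferInstance

/-- A subgroup of `SL(2,ℝ)` is discrete if it is a discrete subspace of `SL(2,ℝ)`. -/
def IsDiscreteSubgroupR (Γ : Subgroup SL2R) : Prop := DiscreteTopology Γ

/-- `S` and `T`, viewed as complex matrices, have a common eigenvector in `ℂ²`. -/
def HasCommonEigenvectorR (S T : SL2R) : Prop :=
  ∃ v : Fin 2 → ℂ, v ≠ 0 ∧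
    (∃ a : ℂ, ((S : Matrix (Fin 2) (Fin 2) ℝ).map (Complex.ofReal ·)).mulVec v = a • v) ∧
    (∃ b : ℂ, ((T : Matrix (Fin 2) (Fin 2) ℝ).map (Complex.ofReal ·)).mulVec v = b • v)

/-- A subgroup of `SL(2,ℝ)` is nonelementary if it contains two elements `S`, `T`
with `S^k ≠ ±1 ≠ T^k` for all `k ≥ 1` having no common eigenvector in `ℂ²`. -/
def IsNonelementaryR (Γ : Subgroup SL2R) : Prop :=
  ∃ S ∈ Γ, ∃ T ∈ Γ, (∀ k : ℕ, 1 ≤ k → S ^ k ≠ 1 ∧ S ^ k ≠ -1) ∧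
    (∀ k : ℕ, 1 ≤ k → T ^ k ≠ 1 ∧ T ^ k ≠ -1) ∧ ¬ HasCommonEigenvectorR S T

/-!
Identify `ℝ²` with `ℂ` and split a matrix into its conformal and anticonformal parts. Then
`dist (g • I) I = 2 * arsinh ‖anti g‖`, so after conjugating `z` to `I` the claim is that two
elements `A`, `B` of a discrete group with `‖anti A‖ ^ 2` and `‖anti B‖ ^ 2` below Yamada's constant
`δ` preserve a common point, geodesic or boundary point, which a nonelementary group forbids.

If `A` or `B` is not elliptic, it is close to `±1`. Among the noncentral elements of the group at
least as close to `±1`, take one closest to `±1`: its commutators with its conjugates by `A` and `B`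
are closer still, hence trivial, so `A` and `B` preserve its axis.

If both are elliptic, replace them by primitive rotations, of traces `2 cos (π / m)` and
`2 cos (π / n)`. Their commutator parameter `tr ⁅A, B⁆ - 2` is four times the negative Gram
determinant of a triangle with two angles `π / m`, `π / n` and third cosine `c = -tr (A B) / 2`, and
it is small. A Jørgensen-type inequality then forces `m, n ≤ 6`, and either `c ≥ cos (π / 7)` or
`c ∈ {cos (π / q), ±cos (2π / 5)}` with `q ≤ 6`. All these cases have too large a commutator
parameter, except for two half-turns, which preserve a common geodesic. The `(2, 3, 7)` triangle is
extremal and determines `δ = 0.0174…`; elsewhere the cruder bound `δ < 0.018` suffices, and the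
constant `0.294` is an upper bound for `8 * 0.018 * 2.036`.
-/

open UpperHalfPlane
open scoped ComplexConjugate Pointwise commutatorElement

/-! ### Properly discontinuous actions on the upper half-plane -/

theorem properlyDiscontinuousSMul_of_isDiscreteSubgroupR {Γ : Subgroup SL2R}
    (hΓ : IsDiscreteSubgroupR Γ) : ProperlyDiscontinuousSMul Γ ℍ :=
  @UpperHalfPlane.instProperlyDiscontinuousSL2RSubgroup Γ hΓ

theorem properlyDiscontinuousSMul_conj {Γ α : Type*} [Group Γ] [TopologicalSpace α]
    [MulAction Γ α] [ContinuousConstSMul Γ α] (G : Subgroup Γ) [ProperlyDiscontinuousSMul G α]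
    (h : Γ) : ProperlyDiscontinuousSMul ↥(MulAut.conj h • G) α := by
  rw [Subgroup.properlyDiscontinuousSMul_iff]
  intro K L hK hL
  have hfin := G.properlyDiscontinuousSMul_iff.mp ‹_› (hK.image (continuous_const_smul h⁻¹))
    (hL.image (continuous_const_smul h⁻¹))
  refine (hfin.image (fun g ↦ h * g * h⁻¹)).subset ?_
  rintro _ ⟨⟨g, hg, rfl⟩, _, ⟨w, hw, rfl⟩, hz⟩
  exact ⟨g, ⟨hg, _, ⟨h⁻¹ • w, ⟨w, hw, rfl⟩, by simp [mul_smul]⟩, ⟨_, hz, rfl⟩⟩, rfl⟩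

theorem neg_smul_eq_smul (g : SL2R) (z : ℍ) : -g • z = g • z := by
  ext
  simp only [coe_specialLinearGroup_apply, Matrix.SpecialLinearGroup.coe_neg, Matrix.neg_apply]
  rw [← neg_div_neg_eq]
  simp [add_comm]

/-- The subgroup `±Γ`. It moves points exactly as `Γ` does, and its groups of rotations about a
point have even order. -/
def adjoinNegOne (Γ : Subgroup SL2R) : Subgroup SL2R where
  carrier := {g | g ∈ Γ ∨ -g ∈ Γ}
  mul_mem' := by
    rintro a b (ha | ha) (hb | hb)
    · exact .inl (mul_mem ha hb)
    · exact .inr (by simpa using mul_mem ha hb)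
    · exact .inr (by simpa using mul_mem ha hb)
    · exact .inl (by simpa using mul_mem ha hb)
  one_mem' := .inl Γ.one_mem
  inv_mem' := by
    rintro a (ha | ha)
    · exact .inl (inv_mem ha)
    · exact .inr (by simpa [← inv_neg] using inv_mem ha)

theorem le_adjoinNegOne (Γ : Subgroup SL2R) : Γ ≤ adjoinNegOne Γ := fun _ ↦ .inl

theorem neg_one_mem_adjoinNegOne (Γ : Subgroup SL2R) : -1 ∈ adjoinNegOne Γ :=
  .inr (by simp [one_mem])

theorem properlyDiscontinuousSMul_adjoinNegOne (Γ : Subgroup SL2R)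
    [ProperlyDiscontinuousSMul Γ ℍ] : ProperlyDiscontinuousSMul ↥(adjoinNegOne Γ) ℍ := by
  rw [Subgroup.properlyDiscontinuousSMul_iff]
  intro K L hK hL
  have hfin := Γ.properlyDiscontinuousSMul_iff.mp ‹_› hK hL
  refine (hfin.union (hfin.image Neg.neg)).subset ?_
  rintro g ⟨hg | hg, z, ⟨w, hw, rfl⟩, hz⟩
  · exact .inl ⟨hg, _, ⟨w, hw, rfl⟩, hz⟩
  · exact .inr ⟨-g, ⟨hg, _, ⟨w, hw, neg_smul_eq_smul g w⟩, hz⟩, neg_neg g⟩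

/-! ### Conformal and anticonformal parts -/

/-- Real `2 × 2` matrices. -/
abbrev M2R := Matrix (Fin 2) (Fin 2) ℝ

theorem coe_mul_coe_inv (g : SL2R) : (g : M2R) * (g⁻¹ : SL2R) = 1 := by
  rw [← Matrix.SpecialLinearGroup.coe_mul, mul_inv_cancel, Matrix.SpecialLinearGroup.coe_one]

theorem coe_inv_mul_coe (g : SL2R) : ((g⁻¹ : SL2R) : M2R) * g = 1 := by
  rw [← Matrix.SpecialLinearGroup.coe_mul, inv_mul_cancel, Matrix.SpecialLinearGroup.coe_one]

/-- The conformal part of a real matrix: under `ℝ² = ℂ`, the matrix `M` acts as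
`z ↦ conf M * z + anti M * conj z`. -/
def conf : M2R →ₗ[ℝ] ℂ where
  toFun M := ⟨(M 0 0 + M 1 1) / 2, (M 1 0 - M 0 1) / 2⟩
  map_add' M N := by apply Complex.ext <;> simp <;> ring
  map_smul' c M := by apply Complex.ext <;> simp <;> ring

/-- The anticonformal part of a real matrix, see `conf`. For `g ∈ SL(2,ℝ)` its norm measures how
far `g` moves `i`. -/
def anti : M2R →ₗ[ℝ] ℂ where
  toFun M := ⟨(M 0 0 - M 1 1) / 2, (M 1 0 + M 0 1) / 2⟩
  map_add' M N := by apply Complex.ext <;> simp <;> ring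
  map_smul' c M := by apply Complex.ext <;> simp <;> ring

theorem conf_apply (M : M2R) : conf M = ⟨(M 0 0 + M 1 1) / 2, (M 1 0 - M 0 1) / 2⟩ := rfl

theorem anti_apply (M : M2R) : anti M = ⟨(M 0 0 - M 1 1) / 2, (M 1 0 + M 0 1) / 2⟩ := rfl

theorem conf_mul (M N : M2R) : conf (M * N) = conf M * conf N + anti M * conj (anti N) := by
  apply Complex.ext <;> simp [conf_apply, anti_apply, Matrix.mul_apply] <;> ring

theorem anti_mul (M N : M2R) : anti (M * N) = conf M * anti N + anti M * conj (conf N) := by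
  apply Complex.ext <;> simp [conf_apply, anti_apply, Matrix.mul_apply] <;> ring

theorem conf_one : conf 1 = 1 := by
  apply Complex.ext <;> simp [conf_apply]

theorem anti_one : anti 1 = 0 := by
  apply Complex.ext <;> simp [anti_apply]

theorem conf_adjugate (M : M2R) : conf M.adjugate = conj (conf M) := by
  apply Complex.ext <;> simp [conf_apply, Matrix.adjugate_fin_two] <;> ring

theorem anti_adjugate (M : M2R) : anti M.adjugate = -anti M := by
  apply Complex.ext <;> simp [anti_apply, Matrix.adjugate_fin_two] <;> ring

theorem trace_eq_two_mul_re_conf (M : M2R) : M.trace = 2 * (conf M).re := by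
  simp [conf_apply, Matrix.trace_fin_two]; ring

theorem det_eq_sq_norm_conf_sub_sq_norm_anti (M : M2R) :
    M.det = ‖conf M‖ ^ 2 - ‖anti M‖ ^ 2 := by
  simp only [Complex.sq_norm, Complex.normSq_apply, conf_apply, anti_apply, Matrix.det_fin_two]
  ring

theorem ext_conf_anti {M N : M2R} (hc : conf M = conf N) (ha : anti M = anti N) : M = N := by
  simp only [conf_apply, anti_apply, Complex.mk.injEq] at hc ha
  ext i j
  fin_cases i <;> fin_cases j <;> simp <;> linarith

theorem sq_norm_conf (g : SL2R) : ‖conf g‖ ^ 2 = 1 + ‖anti g‖ ^ 2 := by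
  linarith [det_eq_sq_norm_conf_sub_sq_norm_anti g, g.det_coe]

theorem coe_smul_I (g : SL2R) : ((g • I : ℍ) : ℂ) =
    ⟨(g 0 0 * g 1 0 + g 0 1 * g 1 1) / (g 1 0 ^ 2 + g 1 1 ^ 2), 1 / (g 1 0 ^ 2 + g 1 1 ^ 2)⟩ := by
  have hdet := g.det_coe
  rw [Matrix.det_fin_two] at hdet
  rw [coe_specialLinearGroup_apply]
  apply Complex.ext <;>
    simp only [Algebra.algebraMap_self, ringHom_apply, coe_I, Complex.div_re, Complex.div_im,
      Complex.add_re, Complex.add_im, Complex.mul_re, Complex.mul_im, Complex.ofReal_re,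
      Complex.ofReal_im, Complex.I_re, Complex.I_im, mul_zero, mul_one, sub_self, zero_add,
      add_zero, Complex.normSq_apply, one_div] <;>
    field_simp
  · ring
  · linear_combination hdet / (g 1 0 ^ 2 + g 1 1 ^ 2)

theorem dist_smul_I_I (g : SL2R) : dist (g • I) I = 2 * arsinh ‖anti g‖ := by
  have hdet := g.det_coe
  rw [Matrix.det_fin_two] at hdet
  have hpos : 0 < g 1 0 ^ 2 + g 1 1 ^ 2 := by
    rcases eq_or_ne (g 1 0) 0 with hc | hc
    · have : g 1 1 ≠ 0 := by rintro hd; simp [hc, hd] at hdet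
      positivity
    · positivity
  rw [dist_eq_iff_eq_sq_sinh (by simp), mul_div_cancel_left₀ _ two_ne_zero, sinh_arsinh,
    Complex.dist_eq, ← coe_im, coe_smul_I, Complex.sq_norm, Complex.sq_norm, anti_apply]
  simp only [Complex.normSq_apply, Complex.sub_re, Complex.sub_im, coe_I, Complex.I_re,
    Complex.I_im, I_im]
  field_simp
  linear_combination (8 * (g 1 0 ^ 2 + g 1 1 ^ 2) - 4 * (g 0 0 * g 1 1 - g 0 1 * g 1 0) - 4) * hdet

/-! ### The commutator parameter -/

/-- The traceless part of a matrix. For `g ∈ SL(2,ℝ)` it determines the fixed points of `g`. -/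
def traceless : M2R →ₗ[ℝ] M2R where
  toFun M := M - (M.trace / 2) • 1
  map_add' M N := by rw [Matrix.trace_add, add_div, add_smul]; abel
  map_smul' c M := by
    rw [Matrix.trace_smul, smul_eq_mul, mul_div_assoc, mul_smul, smul_sub, RingHom.id_apply]

theorem traceless_apply (M : M2R) : traceless M = M - (M.trace / 2) • 1 := rfl

theorem trace_traceless (M : M2R) : (traceless M).trace = 0 := by
  simp [traceless_apply]

theorem conf_traceless (M : M2R) : conf (traceless M) = ⟨0, (conf M).im⟩ := by
  rw [traceless_apply, map_sub, map_smul, conf_one, trace_eq_two_mul_re_conf]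
  apply Complex.ext <;> simp

theorem anti_traceless (M : M2R) : anti (traceless M) = anti M := by
  simp [traceless_apply, anti_one]

theorem traceless_eq_zero_iff {M : M2R} :
    traceless M = 0 ↔ (conf M).im = 0 ∧ anti M = 0 := by
  refine ⟨fun h ↦ ?_, fun ⟨hc, ha⟩ ↦ ext_conf_anti ?_ ?_⟩
  · have hc := conf_traceless M
    have ha := anti_traceless M
    rw [h, map_zero] at hc ha
    exact ⟨(congrArg Complex.im hc).symm, ha.symm⟩
  · rw [conf_traceless, hc, map_zero]; rfl
  · rw [anti_traceless, ha, map_zero]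

theorem traceless_conj (h g : SL2R) :
    traceless (h * g * h⁻¹ : SL2R) = h * traceless g * (h⁻¹ : SL2R) := by
  rw [traceless_apply, traceless_apply, Matrix.SpecialLinearGroup.coe_mul,
    Matrix.SpecialLinearGroup.coe_mul, Matrix.trace_mul_cycle, coe_inv_mul_coe, Matrix.one_mul,
    Matrix.mul_sub, Matrix.sub_mul, Matrix.mul_smul, Matrix.smul_mul, Matrix.mul_one,
    coe_mul_coe_inv]

theorem commutator_traceless (A B : M2R) :
    traceless A * traceless B - traceless B * traceless A = A * B - B * A := by
  simp only [traceless_apply, Matrix.sub_mul, Matrix.mul_sub, Matrix.smul_mul, Matrix.mul_smul,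
    Matrix.one_mul, Matrix.mul_one]
  module

theorem conf_commutator (A B : M2R) :
    conf (A * B - B * A) = ⟨0, 2 * (anti A * conj (anti B)).im⟩ := by
  rw [map_sub, conf_mul, conf_mul]
  apply Complex.ext <;> simp <;> ring

theorem anti_commutator (A B : M2R) :
    anti (A * B - B * A) =
      2 * Complex.I * ((conf A).im * anti B - (conf B).im * anti A) := by
  rw [map_sub, anti_mul, anti_mul]
  apply Complex.ext <;> simp <;> ring

/-- The commutator parameter of Gehring and Martin. For `A B ∈ SL(2,ℝ)` it equals
`trace (A * B * A⁻¹ * B⁻¹) - 2`. -/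
def commParam (A B : M2R) : ℝ := -(A * B - B * A).det

theorem commParam_comm (A B : M2R) : commParam A B = commParam B A := by
  rw [commParam, commParam, ← neg_sub, Matrix.det_neg]
  simp

theorem commParam_eq_of_traceless {A A' : M2R} {κ : ℝ} (h : traceless A' = κ • traceless A)
    (B : M2R) : commParam A' B = κ ^ 2 * commParam A B := by
  rw [commParam, commParam, ← commutator_traceless, ← commutator_traceless A, h, Matrix.smul_mul,
    Matrix.mul_smul, ← smul_sub, Matrix.det_smul, Fintype.card_fin, mul_neg]

theorem commParam_mul_right (A B : M2R) : commParam A (A * B) = A.det * commParam A B := by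
  rw [commParam, commParam, Matrix.mul_assoc, ← Matrix.mul_sub, Matrix.det_mul, mul_neg]

theorem commParam_neg_right (A B : M2R) : commParam A (-B) = commParam A B := by
  rw [commParam, commParam, Matrix.mul_neg, Matrix.neg_mul, ← neg_sub', Matrix.det_neg]
  simp

theorem commParam_eq_conf_anti (A B : M2R) :
    commParam A B = 4 * (‖(conf A).im * anti B - (conf B).im * anti A‖ ^ 2 -
      (anti A * conj (anti B)).im ^ 2) := by
  rw [commParam, det_eq_sq_norm_conf_sub_sq_norm_anti, conf_commutator, anti_commutator, norm_mul,
    norm_mul, Complex.norm_I, Complex.sq_norm, Complex.normSq_apply, RCLike.norm_ofNat]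
  ring

/-- Fricke's identity. -/
theorem commParam_eq_trace (A B : M2R) :
    commParam A B = A.trace ^ 2 * B.det + B.trace ^ 2 * A.det + (A * B).trace ^ 2 -
      A.trace * B.trace * (A * B).trace - 4 * A.det * B.det := by
  simp only [commParam, Matrix.det_fin_two, Matrix.trace_fin_two, Matrix.mul_apply,
    Fin.sum_univ_two, Matrix.sub_apply]
  ring

theorem commParam_conj_right (A B : SL2R) :
    commParam A (B * A * B⁻¹ : SL2R) =
      commParam A B * (commParam A B + (4 - (A : M2R).trace ^ 2)) := by
  have hA := A.det_coe
  have hB := B.det_coe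
  rw [Matrix.SpecialLinearGroup.coe_mul, Matrix.SpecialLinearGroup.coe_mul,
    Matrix.SpecialLinearGroup.coe_inv]
  suffices ∀ A B : M2R, commParam A (B * A * B.adjugate) =
      commParam A B * (commParam A B + B.det * (4 * A.det - A.trace ^ 2)) by
    simpa [hA, hB] using this A B
  intro A B
  simp only [commParam, Matrix.det_fin_two, Matrix.trace_fin_two, Matrix.mul_apply,
    Fin.sum_univ_two, Matrix.sub_apply, Matrix.adjugate_fin_two, Matrix.of_apply, Matrix.cons_val]
  ring

theorem trace_conj (g h : SL2R) : ((h * g * h⁻¹ : SL2R) : M2R).trace = (g : M2R).trace := by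
  rw [Matrix.SpecialLinearGroup.coe_mul, Matrix.trace_mul_comm, ← Matrix.SpecialLinearGroup.coe_mul,
    inv_mul_cancel_left]

/-! ### Elliptic elements -/

theorem sq_trace_lt_four_iff {g : SL2R} :
    (g : M2R).trace ^ 2 < 4 ↔ ‖anti g‖ ^ 2 < (conf g).im ^ 2 := by
  have h := sq_norm_conf g
  rw [Complex.sq_norm, Complex.normSq_apply] at h
  rw [trace_eq_two_mul_re_conf]
  constructor <;> intro _ <;> nlinarith

theorem sq_im_conf (g : SL2R) :
    (conf g).im ^ 2 = 1 - ((g : M2R).trace / 2) ^ 2 + ‖anti g‖ ^ 2 := by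
  have h := sq_norm_conf g
  rw [Complex.sq_norm, Complex.normSq_apply] at h
  rw [trace_eq_two_mul_re_conf]
  linarith

theorem trace_mul (A B : M2R) : (A * B).trace = A.trace * B.trace / 2 +
    2 * ((anti A * conj (anti B)).re - (conf A).im * (conf B).im) := by
  simp only [trace_eq_two_mul_re_conf, conf_mul, Complex.add_re, Complex.mul_re]
  ring

section Elliptic

variable {A B : M2R}

theorem commParam_pos (hA : ‖anti A‖ ^ 2 < (conf A).im ^ 2) (hAB : A * B ≠ B * A) :
    0 < commParam A B := by
  set w : ℂ := (conf A).im * anti B - (conf B).im * anti A with hw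
  set p : ℝ := (anti A * conj (anti B)).im with hp
  have him : (conf A).im * p = (anti A * conj w).im := by
    simp [hw, hp]; ring
  have hle : (conf A).im ^ 2 * p ^ 2 ≤ ‖anti A‖ ^ 2 * ‖w‖ ^ 2 := by
    rw [← mul_pow, ← mul_pow, him, sq_le_sq, abs_of_nonneg (by positivity : 0 ≤ ‖anti A‖ * ‖w‖)]
    simpa using Complex.abs_im_le_norm (anti A * conj w)
  have ht : 0 < (conf A).im ^ 2 := (sq_nonneg _).trans_lt hA
  have hw0 : w ≠ 0 := by
    intro hw0
    have hp0 : p = 0 := by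
      rw [hw0, norm_zero, zero_pow two_ne_zero, mul_zero] at hle
      exact pow_eq_zero_iff two_ne_zero |>.mp
        (le_antisymm (nonpos_of_mul_nonpos_right hle ht) (sq_nonneg p))
    refine hAB (sub_eq_zero.mp (ext_conf_anti ?_ ?_))
    · rw [conf_commutator, ← hp, hp0, mul_zero, map_zero]; rfl
    · rw [anti_commutator, ← hw, hw0, mul_zero, map_zero]
  have hw_pos : 0 < ‖w‖ ^ 2 := by positivity
  rw [commParam_eq_conf_anti]
  nlinarith

theorem trace_mul_lt (hA : ‖anti A‖ ^ 2 < (conf A).im ^ 2) (hB : ‖anti B‖ ^ 2 < (conf B).im ^ 2)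
    (hA' : 0 < (conf A).im) (hB' : 0 < (conf B).im) :
    (A * B).trace < A.trace * B.trace / 2 := by
  have hre : (anti A * conj (anti B)).re ≤ ‖anti A‖ * ‖anti B‖ := by
    simpa using Complex.re_le_norm (anti A * conj (anti B))
  have := mul_lt_mul'' (lt_of_pow_lt_pow_left₀ 2 hA'.le hA) (lt_of_pow_lt_pow_left₀ 2 hB'.le hB)
    (norm_nonneg _) (norm_nonneg _)
  rw [trace_mul]
  linarith

theorem commParam_lt {d : ℝ} (hA : ‖anti A‖ ^ 2 < d) (hB : ‖anti B‖ ^ 2 < d)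
    (hA' : 0 < (conf A).im) (hB' : 0 < (conf B).im) :
    commParam A B < 4 * d * ((conf A).im + (conf B).im) ^ 2 := by
  have hnorm : ‖((conf A).im * anti B - (conf B).im * anti A : ℂ)‖ <
      √d * ((conf A).im + (conf B).im) := by
    calc _ ≤ ‖((conf A).im * anti B : ℂ)‖ + ‖((conf B).im * anti A : ℂ)‖ := norm_sub_le _ _
      _ = (conf A).im * ‖anti B‖ + (conf B).im * ‖anti A‖ := by
        simp [abs_of_pos hA', abs_of_pos hB']
      _ < (conf A).im * √d + (conf B).im * √d := by
        gcongr <;> exact Real.lt_sqrt_of_sq_lt ‹_›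
      _ = _ := by ring
  have hsq := pow_lt_pow_left₀ hnorm (norm_nonneg _) two_ne_zero
  rw [mul_pow, Real.sq_sqrt ((sq_nonneg _).trans hA.le)] at hsq
  rw [commParam_eq_conf_anti]
  nlinarith [sq_nonneg (anti A * conj (anti B)).im]

end Elliptic

/-! ### Finiteness -/

theorem finite_mem_and_norm_anti_le (G : Subgroup SL2R) [ProperlyDiscontinuousSMul G ℍ] (r : ℝ) :
    {g | g ∈ G ∧ ‖anti g‖ ≤ r}.Finite := by
  refine (G.properlyDiscontinuousSMul_iff.mp ‹_› (isCompact_singleton (x := I))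
    (isCompact_closedBall I (2 * arsinh r))).subset fun g ⟨hg, hr⟩ ↦ ⟨hg, g • I, ?_⟩
  refine ⟨Set.smul_mem_smul_set rfl, ?_⟩
  rw [Metric.mem_closedBall, dist_smul_I_I]
  gcongr

/-! ### Matrix norms -/

/-- Half of the squared Frobenius norm. -/
def size (M : M2R) : ℝ := ‖conf M‖ ^ 2 + ‖anti M‖ ^ 2

/-- The operator norm for the Euclidean norm on `ℝ² = ℂ`: `z ↦ a * z + b * conj z` stretches by at
most `‖a‖ + ‖b‖`, and this is attained. -/
def opNorm (M : M2R) : ℝ := ‖conf M‖ + ‖anti M‖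

theorem size_nonneg (M : M2R) : 0 ≤ size M := by unfold size; positivity

theorem opNorm_nonneg (M : M2R) : 0 ≤ opNorm M := by unfold opNorm; positivity

theorem norm_conf_mul_le (M N : M2R) :
    ‖conf (M * N)‖ ≤ ‖conf M‖ * ‖conf N‖ + ‖anti M‖ * ‖anti N‖ := by
  rw [conf_mul]
  exact (norm_add_le _ _).trans_eq (by simp)

theorem norm_anti_mul_le (M N : M2R) :
    ‖anti (M * N)‖ ≤ ‖conf M‖ * ‖anti N‖ + ‖anti M‖ * ‖conf N‖ := by
  rw [anti_mul]
  exact (norm_add_le _ _).trans_eq (by simp)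

theorem opNorm_mul_le (M N : M2R) : opNorm (M * N) ≤ opNorm M * opNorm N := by
  unfold opNorm
  linarith [norm_conf_mul_le M N, norm_anti_mul_le M N]

theorem size_mul_le (M N : M2R) : size (M * N) ≤ opNorm M ^ 2 * size N := by
  unfold size opNorm
  calc ‖conf (M * N)‖ ^ 2 + ‖anti (M * N)‖ ^ 2
      ≤ (‖conf M‖ * ‖conf N‖ + ‖anti M‖ * ‖anti N‖) ^ 2 +
        (‖conf M‖ * ‖anti N‖ + ‖anti M‖ * ‖conf N‖) ^ 2 := by
        gcongr
        exacts [norm_conf_mul_le M N, norm_anti_mul_le M N]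
    _ ≤ (‖conf M‖ + ‖anti M‖) ^ 2 * (‖conf N‖ ^ 2 + ‖anti N‖ ^ 2) := by
        linarith [mul_nonneg (mul_nonneg (norm_nonneg (conf M)) (norm_nonneg (anti M)))
          (sq_nonneg (‖conf N‖ - ‖anti N‖))]

theorem size_mul_le' (M N : M2R) : size (M * N) ≤ size M * opNorm N ^ 2 := by
  unfold size opNorm
  calc ‖conf (M * N)‖ ^ 2 + ‖anti (M * N)‖ ^ 2
      ≤ (‖conf M‖ * ‖conf N‖ + ‖anti M‖ * ‖anti N‖) ^ 2 +
        (‖conf M‖ * ‖anti N‖ + ‖anti M‖ * ‖conf N‖) ^ 2 := by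
        gcongr
        exacts [norm_conf_mul_le M N, norm_anti_mul_le M N]
    _ ≤ (‖conf M‖ ^ 2 + ‖anti M‖ ^ 2) * (‖conf N‖ + ‖anti N‖) ^ 2 := by
        linarith [mul_nonneg (mul_nonneg (norm_nonneg (conf N)) (norm_nonneg (anti N)))
          (sq_nonneg (‖conf M‖ - ‖anti M‖))]

theorem opNorm_inv (g : SL2R) : opNorm (g⁻¹ : SL2R) = opNorm g := by
  rw [Matrix.SpecialLinearGroup.coe_inv, opNorm, conf_adjugate, anti_adjugate, norm_neg,
    Complex.norm_conj, opNorm]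

theorem size_conj_le (h : SL2R) (M : M2R) :
    size (h * M * (h⁻¹ : SL2R)) ≤ opNorm h ^ 4 * size M := by
  calc size (h * M * (h⁻¹ : SL2R)) ≤ size (h * M) * opNorm h ^ 2 := by
        rw [← opNorm_inv h]; exact size_mul_le' _ _
    _ ≤ opNorm h ^ 2 * size M * opNorm h ^ 2 := by gcongr; exact size_mul_le _ _
    _ = opNorm h ^ 4 * size M := by ring

theorem size_traceless (M : M2R) : size (traceless M) = (conf M).im ^ 2 + ‖anti M‖ ^ 2 := by
  rw [size, conf_traceless, anti_traceless, Complex.sq_norm, Complex.normSq_apply]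
  ring

theorem size_traceless_le (M : M2R) (c : ℝ) : size (traceless M) ≤ size (M - c • 1) := by
  rw [size_traceless, size, map_sub, map_sub, map_smul, map_smul, conf_one, anti_one, smul_zero,
    sub_zero, Complex.sq_norm (conf M - _), Complex.normSq_apply]
  simp only [Complex.real_smul, mul_one, Complex.sub_re, Complex.ofReal_re, Complex.sub_im,
    Complex.ofReal_im, sub_zero, add_le_add_iff_right]
  nlinarith

theorem eq_zero_of_size_eq_zero {M : M2R} (h : size M = 0) : M = 0 := by
  unfold size at h
  have hc : ‖conf M‖ ^ 2 = 0 := by nlinarith [sq_nonneg ‖conf M‖, sq_nonneg ‖anti M‖]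
  have ha : ‖anti M‖ ^ 2 = 0 := by linarith
  exact ext_conf_anti (by simpa using hc) (by simpa using ha)

/-- The Böttcher–Wenzel inequality. -/
theorem size_commutator_le (A B : M2R) :
    size (A * B - B * A) ≤ 4 * size (traceless A) * size (traceless B) := by
  rw [size_traceless, size_traceless, size, conf_commutator, anti_commutator]
  simp only [Complex.sq_norm, Complex.normSq_apply]
  simp only [mul_zero, Complex.mul_im, Complex.conj_im, mul_neg, Complex.conj_re, zero_add,
    Complex.mul_re, Complex.re_ofNat, Complex.I_re, Complex.im_ofNat, Complex.I_im, mul_one,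
    sub_self, Complex.sub_re, Complex.ofReal_re, Complex.ofReal_im, zero_mul, sub_zero, add_zero,
    Complex.sub_im, zero_sub, neg_mul, neg_neg]
  linarith [sq_nonneg ((conf A).im * (conf B).im + (anti A).re * (anti B).re +
    (anti A).im * (anti B).im)]

/-! ### Common axes -/

/-- The elements of `SL(2,ℝ)` whose conjugation action preserves the line spanned by `X`. For
traceless `X ≠ 0` this is the stabilizer of the fixed points of `X`: a point of `ℍ`, a geodesic, or
a boundary point according to the sign of `det X`. -/
def axisStabilizer (X : M2R) : Subgroup SL2R where
  carrier := {T | ∃ c : ℝˣ, T * X = c • (X * (T : M2R))}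
  mul_mem' := by
    rintro S T ⟨c, hc⟩ ⟨d, hd⟩
    refine ⟨c * d, ?_⟩
    rw [Matrix.SpecialLinearGroup.coe_mul, Matrix.mul_assoc, hd, Matrix.mul_smul,
      ← Matrix.mul_assoc, hc, Matrix.smul_mul, smul_smul, Matrix.mul_assoc, mul_comm c d]
  one_mem' := ⟨1, by simp⟩
  inv_mem' := by
    rintro T ⟨c, hc⟩
    refine ⟨c⁻¹, ?_⟩
    calc ((T⁻¹ : SL2R) : M2R) * X
        = (T⁻¹ : SL2R) * (c⁻¹ • c • (X * (T : M2R))) * (T⁻¹ : SL2R) := by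
          rw [inv_smul_smul, Matrix.mul_assoc, Matrix.mul_assoc, coe_mul_coe_inv,
            Matrix.mul_one]
      _ = c⁻¹ • ((T⁻¹ : SL2R) * (T : M2R) * X * (T⁻¹ : SL2R)) := by
          rw [← hc, Matrix.mul_smul, Matrix.smul_mul, Matrix.mul_assoc (_ : M2R) (T : M2R) X]
      _ = c⁻¹ • (X * ((T⁻¹ : SL2R) : M2R)) := by rw [coe_inv_mul_coe, Matrix.one_mul]

theorem mem_axisStabilizer_of_commute {T : SL2R} {X : M2R} (h : T * X = X * T) :
    T ∈ axisStabilizer X :=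
  ⟨1, by rw [h, one_smul]⟩

/-- `A` and `B` preserve a common point of `ℍ`, geodesic, or boundary point. -/
def HaveCommonAxis (A B : SL2R) : Prop :=
  ∃ X : M2R, X.trace = 0 ∧ X ≠ 0 ∧ A ∈ axisStabilizer X ∧ B ∈ axisStabilizer X

theorem HaveCommonAxis.conj {A B : SL2R} (hAB : HaveCommonAxis A B) (h : SL2R) :
    HaveCommonAxis (h * A * h⁻¹) (h * B * h⁻¹) := by
  obtain ⟨X, hX, hX0, hA, hB⟩ := hAB
  have hmem : ∀ T ∈ axisStabilizer X,
      h * T * h⁻¹ ∈ axisStabilizer (h * X * ((h⁻¹ : SL2R) : M2R)) := by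
    rintro T ⟨c, hc⟩
    refine ⟨c, ?_⟩
    calc ((h * T * h⁻¹ : SL2R) : M2R) * (h * X * ((h⁻¹ : SL2R) : M2R))
        = h * (T * (((h⁻¹ : SL2R) : M2R) * h) * X) * ((h⁻¹ : SL2R) : M2R) := by
          simp only [Matrix.SpecialLinearGroup.coe_mul, Matrix.mul_assoc]
      _ = c • (h * (X * (((h⁻¹ : SL2R) : M2R) * h) * T) * ((h⁻¹ : SL2R) : M2R)) := by
          rw [coe_inv_mul_coe, Matrix.mul_one, Matrix.mul_one, hc, Matrix.mul_smul, Matrix.smul_mul]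
      _ = c • (h * X * ((h⁻¹ : SL2R) : M2R) * ((h * T * h⁻¹ : SL2R) : M2R)) := by
          simp only [Matrix.SpecialLinearGroup.coe_mul, Matrix.mul_assoc]
  refine ⟨_, ?_, fun h0 ↦ hX0 ?_, hmem A hA, hmem B hB⟩
  · rw [Matrix.trace_mul_comm, ← Matrix.mul_assoc, coe_inv_mul_coe, Matrix.one_mul, hX]
  · calc
      X = ((h⁻¹ : SL2R) : M2R) * h * X * (((h⁻¹ : SL2R) : M2R) * h) := by
        rw [coe_inv_mul_coe, Matrix.one_mul, Matrix.mul_one]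
      _ = ((h⁻¹ : SL2R) : M2R) * (h * X * ((h⁻¹ : SL2R) : M2R)) * h := by
        simp only [Matrix.mul_assoc]
      _ = 0 := by rw [h0, Matrix.mul_zero, Matrix.zero_mul]

theorem mul_self_eq_trace_smul_sub_det_smul {R : Type*} [CommRing R]
    (M : Matrix (Fin 2) (Fin 2) R) : M * M = M.trace • M - M.det • 1 := by
  cases subsingleton_or_nontrivial R
  · exact Subsingleton.elim _ _
  · have h := M.aeval_self_charpoly
    simp only [Matrix.charpoly_fin_two, map_add, map_sub, map_mul, map_pow, Polynomial.aeval_X,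
      Polynomial.aeval_C, Algebra.algebraMap_eq_smul_one, Matrix.smul_mul, Matrix.one_mul] at h
    rw [← sq, ← sub_eq_zero, ← h]
    abel

theorem sq_eq_neg_one_of_anticommute {S : SL2R} {X : M2R} (hX : X ≠ 0) (h : S * X = -(X * S)) :
    S ^ 2 = -1 := by
  have hcomm : (S : M2R) * S * X = X * (S * S) := by
    rw [Matrix.mul_assoc, h, Matrix.mul_neg, ← Matrix.mul_assoc, h, Matrix.neg_mul, neg_neg,
      Matrix.mul_assoc]
  have htrace : (S : M2R).trace • (S * X) = 0 := by
    rw [mul_self_eq_trace_smul_sub_det_smul, S.det_coe, one_smul, Matrix.sub_mul, Matrix.mul_sub,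
      Matrix.smul_mul, Matrix.mul_smul, Matrix.one_mul, Matrix.mul_one, sub_left_inj,
      ← neg_eq_iff_eq_neg.mpr h, smul_neg] at hcomm
    linear_combination (norm := module) (1 / 2 : ℝ) • hcomm
  have hSX : S * X ≠ 0 := fun h0 ↦ hX <| by
    rw [← Matrix.one_mul X, ← coe_inv_mul_coe S, Matrix.mul_assoc, h0, Matrix.mul_zero]
  apply Subtype.coe_injective
  change ((S ^ 2 : SL2R) : M2R) = ((-1 : SL2R) : M2R)
  rw [Matrix.SpecialLinearGroup.coe_pow, sq, mul_self_eq_trace_smul_sub_det_smul,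
    (smul_eq_zero.mp htrace).resolve_right hSX, S.det_coe, zero_smul, zero_sub, one_smul,
    Matrix.SpecialLinearGroup.coe_neg, Matrix.SpecialLinearGroup.coe_one]

theorem exists_mul_eq_smul_mul_of_mem_axisStabilizer {X : M2R} (hX : X.trace = 0) (hX0 : X ≠ 0)
    {S : SL2R} (hS : S ∈ axisStabilizer X) (hS2 : S ^ 2 ≠ -1) :
    ∃ c : ℝ, c ≠ 0 ∧ S * X = c • (X * S) ∧ (c = 1 ∨ X * X = 0) := by
  obtain ⟨c, hc⟩ := hS
  refine ⟨c, c.ne_zero, hc, ?_⟩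
  have hdet : X.det * (1 - (c : ℝ)) * (1 + c) = 0 := by
    have := congrArg Matrix.det hc
    rw [Units.smul_def, Matrix.det_smul, Matrix.det_mul, Matrix.det_mul, S.det_coe,
      Fintype.card_fin] at this
    linarith
  rw [mul_eq_zero, mul_eq_zero] at hdet
  rcases hdet with (h0 | h1) | hneg
  · exact .inr (by rw [mul_self_eq_trace_smul_sub_det_smul, hX, h0, zero_smul, zero_smul, sub_zero])
  · exact .inl (by linarith)
  · refine absurd (sq_eq_neg_one_of_anticommute hX0 ?_) hS2
    rw [hc, Units.smul_def, eq_neg_of_add_eq_zero_right hneg, neg_one_smul]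

theorem exists_eq_smul_of_mulVec_eq_zero {K : Type*} [Field K] {M : Matrix (Fin 2) (Fin 2) K}
    (hM : M ≠ 0) {v w : Fin 2 → K} (hv : v ≠ 0) (hMv : M *ᵥ v = 0) (hMw : M *ᵥ w = 0) :
    ∃ a : K, w = a • v := by
  set N : Matrix (Fin 2) (Fin 2) K := (Matrix.of ![v, w])ᵀ with hN
  have hMN : M * N = 0 := by
    ext i j
    fin_cases j
    · exact congrFun hMv i
    · exact congrFun hMw i
  have hdet : v 0 * w 1 = v 1 * w 0 := by
    by_contra hne
    have hunit : IsUnit N.det := by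
      simpa [hN, Matrix.det_fin_two, sub_eq_zero] using hne
    exact hM (by rw [← Matrix.mul_nonsing_inv_cancel_right N M hunit, hMN, Matrix.zero_mul])
  obtain ⟨i, hi⟩ := Function.ne_iff.mp hv
  refine ⟨w i / v i, funext fun j ↦ ?_⟩
  rw [Pi.smul_apply, smul_eq_mul, div_mul_eq_mul_div, eq_div_iff hi]
  fin_cases i <;> fin_cases j <;> simp only [Fin.zero_eta, Fin.mk_one] <;>
    first | ring1 | linear_combination hdet | linear_combination -hdet

theorem exists_common_eigenvector {X : M2R} (hX : X.trace = 0) (hX0 : X ≠ 0) :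
    ∃ v : Fin 2 → ℂ, v ≠ 0 ∧ ∀ S ∈ axisStabilizer X, S ^ 2 ≠ -1 →
      ∃ a : ℂ, ((S : M2R).map (Complex.ofReal ·)) *ᵥ v = a • v := by
  set XC := X.map Complex.ofRealHom with hXC
  obtain ⟨μ, hμ⟩ := Module.End.exists_eigenvalue (Matrix.toLin' XC)
  obtain ⟨v, hv⟩ := hμ.exists_hasEigenvector
  have hXv : XC *ᵥ v = μ • v := hv.apply_eq_smul
  refine ⟨v, hv.2, fun S hS hS2 ↦ ?_⟩
  obtain ⟨c, hc0, hc, hc1⟩ := exists_mul_eq_smul_mul_of_mem_axisStabilizer hX hX0 hS hS2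
  set SC := (S : M2R).map Complex.ofRealHom
  have hcC : SC * XC = (c : ℂ) • (XC * SC) := by
    simpa [Matrix.map_mul, Matrix.map_smul] using congrArg (·.map Complex.ofRealHom) hc
  have hcμ : (c : ℂ) * μ = μ := by
    rcases hc1 with rfl | hXX
    · simp
    · have hμμ : (μ * μ) • v = 0 := by
        rw [← smul_smul, ← hXv, ← Matrix.mulVec_smul, ← hXv, Matrix.mulVec_mulVec, hXC,
          ← Matrix.map_mul, hXX]
        simp
      simp [mul_self_eq_zero.mp ((smul_eq_zero.mp hμμ).resolve_right hv.2)]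
  have hne : XC - μ • 1 ≠ 0 := by
    intro h0
    have htr : XC.trace = 0 := by
      rw [hXC, ← AddMonoidHom.map_trace, hX, map_zero]
    have hμ0 : μ = 0 := by simpa [sub_eq_zero.mp h0] using htr
    rw [hμ0, zero_smul, sub_zero] at h0
    exact hX0 (Matrix.map_injective Complex.ofRealHom.injective (h0.trans (by simp)))
  refine exists_eq_smul_of_mulVec_eq_zero hne hv.2 ?_ ?_
  · rw [Matrix.sub_mulVec, hXv, Matrix.smul_mulVec, Matrix.one_mulVec, sub_self]
  · rw [Matrix.sub_mulVec, Matrix.smul_mulVec, Matrix.one_mulVec, sub_eq_zero]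
    have h := congrArg (· *ᵥ v) hcC
    simp only [Matrix.smul_mulVec, ← Matrix.mulVec_mulVec, hXv, Matrix.mulVec_smul] at h
    refine smul_right_injective _ (Complex.ofReal_ne_zero.mpr hc0) ?_
    change (c : ℂ) • (XC *ᵥ (SC *ᵥ v)) = (c : ℂ) • (μ • (SC *ᵥ v))
    rw [← h, smul_smul, hcμ]

theorem not_haveCommonAxis_of_isNonelementaryR {A B : SL2R}
    (h : IsNonelementaryR (Subgroup.closure {A, B})) : ¬ HaveCommonAxis A B := by
  rintro ⟨X, hX, hX0, hA, hB⟩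
  obtain ⟨S, hS, T, hT, hSk, hTk, hST⟩ := h
  obtain ⟨v, hv, hstab⟩ := exists_common_eigenvector hX hX0
  have hle : Subgroup.closure {A, B} ≤ axisStabilizer X := by
    rw [Subgroup.closure_le]
    rintro _ (rfl | rfl)
    exacts [hA, hB]
  exact hST ⟨v, hv, hstab S (hle hS) (hSk 2 one_le_two).2, hstab T (hle hT) (hTk 2 one_le_two).2⟩

theorem mul_comm_of_traceless_eq_zero {M : M2R} (hM : traceless M = 0) (N : M2R) :
    M * N = N * M := by
  rw [← sub_eq_zero, ← commutator_traceless, hM, Matrix.zero_mul, Matrix.mul_zero, sub_zero]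

theorem mul_traceless_comm {M N : M2R} (h : M * N = N * M) :
    N * traceless M = traceless M * N := by
  simp [traceless_apply, Matrix.mul_sub, Matrix.sub_mul, h]

theorem haveCommonAxis_of_commute {A B : SL2R} (h : (A : M2R) * B = B * A) :
    HaveCommonAxis A B := by
  suffices hX : ∃ X : M2R, X.trace = 0 ∧ X ≠ 0 ∧ A * X = X * (A : M2R) ∧ B * X = X * (B : M2R) by
    obtain ⟨X, htr, hX0, hA, hB⟩ := hX
    exact ⟨X, htr, hX0, mem_axisStabilizer_of_commute hA, mem_axisStabilizer_of_commute hB⟩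
  by_cases hA : traceless A = 0
  · by_cases hB : traceless B = 0
    · refine ⟨!![0, 1; 0, 0], by simp [Matrix.trace_fin_two], fun h0 ↦ ?_,
        mul_comm_of_traceless_eq_zero hA _, mul_comm_of_traceless_eq_zero hB _⟩
      simpa using congrFun₂ h0 0 1
    · exact ⟨traceless B, trace_traceless _, hB, mul_traceless_comm h.symm, mul_traceless_comm rfl⟩
  · exact ⟨traceless A, trace_traceless _, hA, mul_traceless_comm rfl, mul_traceless_comm h⟩

theorem haveCommonAxis_of_trace_eq_zero {A B : SL2R} (hA : (A : M2R).trace = 0)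
    (hB : (B : M2R).trace = 0) (h : (A : M2R) * B ≠ B * A) : HaveCommonAxis A B := by
  have hsq : ∀ S : SL2R, (S : M2R).trace = 0 → (S : M2R) * S = -1 := fun S hS ↦ by
    rw [mul_self_eq_trace_smul_sub_det_smul, hS, S.det_coe, zero_smul, one_smul, zero_sub]
  refine ⟨A * B - B * A, ?_, sub_ne_zero.mpr h, ⟨-1, ?_⟩, ⟨-1, ?_⟩⟩
  · rw [Matrix.trace_sub, Matrix.trace_mul_comm, sub_self]
  · have hA1 := hsq A hA
    rw [Units.smul_def, Units.val_neg, Units.val_one, neg_one_smul]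
    linear_combination (norm := noncomm_ring) hA1 * (B : M2R) - (B : M2R) * hA1
  · have hB1 := hsq B hB
    rw [Units.smul_def, Units.val_neg, Units.val_one, neg_one_smul]
    linear_combination (norm := noncomm_ring) (A : M2R) * hB1 - hB1 * (A : M2R)

theorem exists_eq_smul_of_commute {X Y : M2R} (hX : X.trace = 0) (hY : Y.trace = 0) (hX0 : X ≠ 0)
    (h : X * Y = Y * X) : ∃ c : ℝ, Y = c • X := by
  rw [Matrix.trace_fin_two, ← eq_neg_iff_add_eq_zero, eq_comm, neg_eq_iff_eq_neg] at hX hY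
  have h00 := congrFun₂ h 0 0
  have h01 := congrFun₂ h 0 1
  have h10 := congrFun₂ h 1 0
  simp only [Matrix.mul_apply, Fin.sum_univ_two, hX, hY] at h00 h01 h10
  have hpos : X 0 0 ^ 2 + X 0 1 ^ 2 + X 1 0 ^ 2 ≠ 0 := by
    contrapose! hX0
    have h1 : X 0 0 = 0 := by nlinarith
    have h2 : X 0 1 = 0 := by nlinarith
    have h3 : X 1 0 = 0 := by nlinarith
    ext i j
    fin_cases i <;> fin_cases j <;> simp [h1, h2, h3, hX]
  refine ⟨(X 0 0 * Y 0 0 + X 0 1 * Y 0 1 + X 1 0 * Y 1 0) /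
    (X 0 0 ^ 2 + X 0 1 ^ 2 + X 1 0 ^ 2), ?_⟩
  ext i j
  rw [Matrix.smul_apply, smul_eq_mul, div_mul_eq_mul_div, eq_div_iff hpos]
  fin_cases i <;> fin_cases j <;> simp only [Fin.zero_eta, Fin.mk_one, hX, hY]
  · linear_combination (-X 0 1 / 2) * h01 + (X 1 0 / 2) * h10
  · linear_combination (X 0 0 / 2) * h01 - X 1 0 * h00
  · linear_combination (-X 0 0 / 2) * h10 + X 0 1 * h00
  · linear_combination (X 0 1 / 2) * h01 - (X 1 0 / 2) * h10

theorem mem_axisStabilizer_of_commute_conj {g K : SL2R} (hg : traceless g ≠ 0)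
    (h : ((K * g * K⁻¹ : SL2R) : M2R) * g = g * (K * g * K⁻¹ : SL2R)) :
    K ∈ axisStabilizer (traceless g) := by
  have hcomm : traceless g * traceless (K * g * K⁻¹ : SL2R) =
      traceless (K * g * K⁻¹ : SL2R) * traceless g := by
    rw [← sub_eq_zero, commutator_traceless, h, sub_self]
  obtain ⟨c, hc⟩ := exists_eq_smul_of_commute (trace_traceless _) (trace_traceless _) hg hcomm
  have hK : K * traceless g = c • (traceless g * K) := by
    rw [← Matrix.smul_mul, ← hc, traceless_conj, Matrix.mul_assoc, coe_inv_mul_coe, Matrix.mul_one]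
  have hc0 : c ≠ 0 := by
    rintro rfl
    refine hg ?_
    rw [← Matrix.one_mul (traceless _), ← coe_inv_mul_coe K, Matrix.mul_assoc, hK, zero_smul,
      Matrix.mul_zero]
  exact ⟨Units.mk0 c hc0, hK⟩

/-! ### Elements close to the identity -/

theorem eq_one_of_traceless_eq_zero {C : SL2R} (hC : traceless C = 0)
    (hC' : size ((C : M2R) - 1) < 4) : C = 1 := by
  obtain ⟨him, hanti⟩ := traceless_eq_zero_iff.mp hC
  have hnorm := sq_norm_conf C
  rw [size, map_sub, map_sub, conf_one, anti_one, hanti] at hC'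
  rw [hanti] at hnorm
  simp only [Complex.sq_norm, Complex.normSq_apply, Complex.sub_re, Complex.one_re,
    Complex.sub_im, Complex.one_im, him, sub_self, mul_zero, add_zero, Complex.zero_re,
    Complex.zero_im] at hC' hnorm
  refine Subtype.coe_injective (ext_conf_anti (Complex.ext ?_ ?_) ?_)
  · simp only [Matrix.SpecialLinearGroup.coe_one, conf_one, Complex.one_re]
    nlinarith
  · simpa [conf_one] using him
  · simpa [anti_one] using hanti

theorem size_commutatorElement_sub_one_le (g k : SL2R) :
    size ((⁅g, k⁆ : SL2R) - 1 : M2R) ≤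
      4 * size (traceless g) * size (traceless k) * (opNorm k * opNorm g) ^ 2 := by
  have h : ((⁅g, k⁆ : SL2R) - 1 : M2R) = (g * k - k * g) * ((k * g)⁻¹ : SL2R) := by
    rw [Matrix.sub_mul, ← Matrix.SpecialLinearGroup.coe_mul k g, coe_mul_coe_inv,
      commutatorElement_def, mul_assoc, ← _root_.mul_inv_rev, Matrix.SpecialLinearGroup.coe_mul,
      Matrix.SpecialLinearGroup.coe_mul]
  rw [h]
  refine (size_mul_le' _ _).trans ?_
  rw [opNorm_inv, Matrix.SpecialLinearGroup.coe_mul]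
  have := size_commutator_le g k
  have := opNorm_mul_le k g
  have := size_nonneg (traceless g)
  have := size_nonneg (traceless k)
  have := opNorm_nonneg (k * g : M2R)
  gcongr

theorem sq_norm_anti_le_size_traceless (M : M2R) : ‖anti M‖ ^ 2 ≤ size (traceless M) := by
  rw [size_traceless]
  exact le_add_of_nonneg_left (sq_nonneg _)

theorem opNorm_le_of_sq_le {g : SL2R} {r s : ℝ} (hr : 0 ≤ r) (hs : 0 ≤ s) (hrs : 1 + r ^ 2 ≤ s ^ 2)
    (hg : ‖anti g‖ ^ 2 ≤ r ^ 2) : opNorm g ≤ r + s := by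
  have h := sq_norm_conf g
  rw [opNorm, add_comm]
  exact add_le_add (le_of_sq_le_sq hg hr) (le_of_sq_le_sq (by linarith) hs)

theorem size_commutatorElement_conj_sub_one_lt {g K : SL2R} (hg0 : traceless g ≠ 0)
    (hg : size (traceless g) ≤ 0.036) (hK : ‖anti K‖ ^ 2 ≤ 0.018) :
    size ((⁅g, K * g * K⁻¹⁆ : SL2R) - 1 : M2R) < size (traceless g) := by
  have hpos : 0 < size (traceless g) :=
    (size_nonneg _).lt_of_ne fun h ↦ hg0 (eq_zero_of_size_eq_zero h.symm)
  have hK_norm : opNorm K ≤ 1.1432 := by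
    refine (opNorm_le_of_sq_le (r := 0.1342) (s := 1.009) ?_ ?_ ?_ ?_).trans ?_ <;> linarith
  have hk : size (traceless (K * g * K⁻¹ : SL2R)) ≤ 1.709 * size (traceless g) := by
    rw [traceless_conj]
    refine (size_conj_le K _).trans (mul_le_mul_of_nonneg_right ?_ hpos.le)
    exact (pow_le_pow_left₀ (opNorm_nonneg _) hK_norm 4).trans (by norm_num)
  have hg_norm : opNorm g ≤ 1.208 := by
    have := sq_norm_anti_le_size_traceless g
    refine (opNorm_le_of_sq_le (r := 0.19) (s := 1.018) ?_ ?_ ?_ ?_).trans ?_ <;> linarith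
  have hk_norm : opNorm (K * g * K⁻¹ : SL2R) ≤ 1.2785 := by
    have := sq_norm_anti_le_size_traceless (K * g * K⁻¹ : SL2R)
    refine (opNorm_le_of_sq_le (r := 0.2481) (s := 1.0304) ?_ ?_ ?_ ?_).trans ?_ <;> linarith
  calc _ ≤ _ := size_commutatorElement_sub_one_le g (K * g * K⁻¹)
    _ ≤ 4 * 0.036 * (1.709 * size (traceless g)) * (1.2785 * 1.208) ^ 2 := by
      have := opNorm_nonneg g
      have := opNorm_nonneg (K * g * K⁻¹ : SL2R)
      have := size_nonneg (traceless (K * g * K⁻¹ : SL2R))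
      gcongr
    _ < size (traceless g) := by linarith

theorem exists_min_size_traceless (G : Subgroup SL2R) [ProperlyDiscontinuousSMul G ℍ] {T : SL2R}
    (hT : T ∈ G) (hT0 : traceless T ≠ 0) :
    ∃ g ∈ G, traceless g ≠ 0 ∧ size (traceless g) ≤ size (traceless T) ∧
      ∀ k ∈ G, size (traceless k) < size (traceless g) → traceless k = 0 := by
  set s : Set SL2R := {g | g ∈ G ∧ traceless g ≠ 0 ∧ size (traceless g) ≤ size (traceless T)}
  have hfin : s.Finite := by
    refine (finite_mem_and_norm_anti_le G (√(size (traceless T)))).subset fun g hg ↦ ⟨hg.1, ?_⟩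
    exact Real.le_sqrt_of_sq_le ((sq_norm_anti_le_size_traceless _).trans hg.2.2)
  obtain ⟨g, ⟨hgG, hg0, hgT⟩, hmin⟩ :=
    s.exists_min_image (fun g ↦ size (traceless g)) hfin ⟨T, hT, hT0, le_rfl⟩
  refine ⟨g, hgG, hg0, hgT, fun k hk hlt ↦ ?_⟩
  by_contra hk0
  exact hlt.not_ge (hmin k ⟨hk, hk0, hlt.le.trans hgT⟩)

theorem haveCommonAxis_of_size_traceless_le {G : Subgroup SL2R} [ProperlyDiscontinuousSMul G ℍ]
    {A B T : SL2R} (hA : A ∈ G) (hB : B ∈ G) (hT : T ∈ G) (hA_anti : ‖anti A‖ ^ 2 ≤ 0.018)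
    (hB_anti : ‖anti B‖ ^ 2 ≤ 0.018) (hT0 : traceless T ≠ 0)
    (hT_size : size (traceless T) ≤ 0.036) :
    HaveCommonAxis A B := by
  obtain ⟨g, hgG, hg0, hgT, hmin⟩ := exists_min_size_traceless G hT hT0
  have hstab : ∀ K ∈ G, ‖anti K‖ ^ 2 ≤ 0.018 → K ∈ axisStabilizer (traceless g) := by
    intro K hK hK_anti
    have hlt := size_commutatorElement_conj_sub_one_lt hg0 (hgT.trans hT_size) hK_anti
    have hcentral : traceless (⁅g, K * g * K⁻¹⁆ : SL2R) = 0 := by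
      refine hmin _ ?_ ((size_traceless_le _ 1).trans_lt (by rwa [one_smul]))
      rw [commutatorElement_def]
      have hk : K * g * K⁻¹ ∈ G := mul_mem (mul_mem hK hgG) (inv_mem hK)
      exact mul_mem (mul_mem (mul_mem hgG hk) (inv_mem hgG)) (inv_mem hk)
    have hone := eq_one_of_traceless_eq_zero hcentral (by linarith)
    rw [commutatorElement_eq_one_iff_mul_comm] at hone
    refine mem_axisStabilizer_of_commute_conj hg0 ?_
    rw [← Matrix.SpecialLinearGroup.coe_mul, ← Matrix.SpecialLinearGroup.coe_mul, hone]
  exact ⟨traceless g, trace_traceless _, hg0, hstab A hA hA_anti, hstab B hB hB_anti⟩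

/-! ### Jørgensen's inequality -/

theorem commParam_eq_sq_trace_sub (A B : SL2R) : commParam A B =
    ((A * B : M2R).trace - (A : M2R).trace * (B : M2R).trace / 2) ^ 2 -
      (4 - (A : M2R).trace ^ 2) * (4 - (B : M2R).trace ^ 2) / 4 := by
  rw [commParam_eq_trace, A.det_coe, B.det_coe]
  ring

theorem norm_anti_mul_le_abs_trace {A B : M2R} (hB : ‖anti B‖ ≤ |(conf B).im|) :
    ‖anti B‖ * (|(conf A).im| - ‖anti A‖) ≤ |(A * B).trace - A.trace * B.trace / 2| / 2 := by
  rw [trace_mul, add_sub_cancel_left, abs_mul, abs_two, mul_div_cancel_left₀ _ two_ne_zero]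
  have hre : |(anti A * conj (anti B)).re| ≤ ‖anti A‖ * ‖anti B‖ := by
    simpa using Complex.abs_re_le_norm (anti A * conj (anti B))
  have him : |(conf A).im| * ‖anti B‖ ≤ |(conf A).im * (conf B).im| := by
    rw [abs_mul]
    gcongr
  linarith [abs_sub_abs_le_abs_sub ((conf A).im * (conf B).im) (anti A * conj (anti B)).re,
    abs_sub_comm (anti A * conj (anti B)).re ((conf A).im * (conf B).im)]

theorem finite_trace_eq_and_commParam_le (G : Subgroup SL2R) [ProperlyDiscontinuousSMul G ℍ]
    {A : SL2R} (hA : (A : M2R).trace ^ 2 < 4) (u : ℝ) :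
    {g | g ∈ G ∧ (g : M2R).trace = (A : M2R).trace ∧ commParam A g ≤ u}.Finite := by
  have hd : 0 < |(conf A).im| - ‖anti A‖ :=
    sub_pos.mpr (by simpa using sq_lt_sq.mp (sq_trace_lt_four_iff.mp hA))
  set k := (4 - (A : M2R).trace ^ 2) * (4 - (A : M2R).trace ^ 2) / 4 with hk
  refine (finite_mem_and_norm_anti_le G
    (√(u + k) / 2 / (|(conf A).im| - ‖anti A‖))).subset fun g ⟨hg, htr, hu⟩ ↦ ⟨hg, ?_⟩
  have hg_elliptic : ‖anti g‖ < |(conf g).im| := by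
    simpa using sq_lt_sq.mp (sq_trace_lt_four_iff.mp (htr ▸ hA))
  rw [le_div_iff₀ hd]
  refine (norm_anti_mul_le_abs_trace hg_elliptic.le).trans ?_
  gcongr
  refine Real.abs_le_sqrt ?_
  rw [commParam_eq_sq_trace_sub, htr, ← hk] at hu
  rw [htr]
  linarith

theorem one_le_commParam_add {G : Subgroup SL2R} [ProperlyDiscontinuousSMul G ℍ] {A B : SL2R}
    (hA : A ∈ G) (hB : B ∈ G) (hA_elliptic : (A : M2R).trace ^ 2 < 4) (hAB : 0 < commParam A B) :
    1 ≤ commParam A B + (4 - (A : M2R).trace ^ 2) := by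
  by_contra! hlt
  have hdescent : ∀ g ∈ G, 0 < commParam A g → commParam A g ≤ commParam A B →
      g * A * g⁻¹ ∈ G ∧ 0 < commParam A (g * A * g⁻¹ : SL2R) ∧
        commParam A (g * A * g⁻¹ : SL2R) < commParam A g := by
    intro g hg hpos hle
    rw [commParam_conj_right]
    exact ⟨mul_mem (mul_mem hg hA) (inv_mem hg), by nlinarith, by nlinarith⟩
  set s : Set SL2R := {g | (g ∈ G ∧ (g : M2R).trace = (A : M2R).trace ∧
    commParam A g ≤ commParam A B) ∧ 0 < commParam A g}
  have hs : s.Finite := (finite_trace_eq_and_commParam_le G hA_elliptic _).sep _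
  obtain ⟨hG, hpos, hlt_B⟩ := hdescent B hB hAB le_rfl
  obtain ⟨g, ⟨⟨hgG, -, hgle⟩, hgpos⟩, hmin⟩ :=
    s.exists_min_image (commParam A ·) hs ⟨_, ⟨hG, trace_conj A B, hlt_B.le⟩, hpos⟩
  obtain ⟨hG', hpos', hlt_g⟩ := hdescent g hgG hgpos hgle
  exact (hmin _ ⟨⟨hG', trace_conj A g, hlt_g.le.trans hgle⟩, hpos'⟩).not_gt hlt_g

/-! ### Rotations about a fixed point -/

theorem exists_eq_zmultiples_div_of_finite {H : AddSubgroup ℝ} {a : ℝ} (ha : 0 < a) (haH : a ∈ H)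
    (hfin : (H ∩ Set.Ioo 0 a : Set ℝ).Finite) :
    ∃ n : ℕ, 0 < n ∧ H = AddSubgroup.zmultiples (a / n) := by
  have hfin' : (H ∩ Set.Ioc 0 a : Set ℝ).Finite := by
    refine (hfin.insert a).subset fun t ⟨htH, ht0, hta⟩ ↦ ?_
    exact hta.eq_or_lt.imp id fun hlt ↦ ⟨htH, ht0, hlt⟩
  obtain ⟨b, ⟨hbH, hb0, hba⟩, hmin⟩ := Set.exists_min_image _ id hfin' ⟨a, haH, ha, le_rfl⟩
  have hH : H = AddSubgroup.zmultiples b := by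
    rw [AddSubgroup.zmultiples_eq_closure]
    refine AddSubgroup.cyclic_of_min ⟨⟨hbH, hb0⟩, fun t ⟨htH, ht0⟩ ↦ ?_⟩
    rcases le_or_gt t a with hta | hta
    · exact hmin t ⟨htH, ht0, hta⟩
    · exact hba.trans hta.le
  obtain ⟨k, hk⟩ := AddSubgroup.mem_zmultiples_iff.mp (hH ▸ haH)
  rw [zsmul_eq_mul] at hk
  have hk0 : 0 < k := by exact_mod_cast pos_of_mul_pos_left (hk.symm ▸ ha) hb0.le
  lift k to ℕ using hk0.le
  rw [Int.cast_natCast] at hk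
  have hk0' : 0 < k := by exact_mod_cast hk0
  refine ⟨k, hk0', ?_⟩
  rw [hH, ← hk, mul_div_cancel_left₀ b (by positivity)]

/-- The angles `t` such that `cos t + sin t * J` lies in `G`, where `J * J = -1`: these elements of
`SL(2,ℝ)` are the rotations about the fixed point of `J`. -/
def rotationAngles (G : Subgroup SL2R) {J : M2R} (hJ : J * J = -1) : AddSubgroup ℝ where
  carrier := {t | ∃ g ∈ G, (g : M2R) = cos t • 1 + sin t • J}
  add_mem' := by
    rintro s t ⟨g, hg, hgs⟩ ⟨h, hh, hht⟩
    refine ⟨g * h, mul_mem hg hh, ?_⟩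
    rw [Matrix.SpecialLinearGroup.coe_mul, hgs, hht, cos_add, sin_add]
    simp only [Matrix.add_mul, Matrix.mul_add, Matrix.smul_mul, Matrix.mul_smul, Matrix.one_mul,
      Matrix.mul_one, hJ]
    module
  zero_mem' := ⟨1, one_mem G, by simp⟩
  neg_mem' := by
    rintro t ⟨g, hg, hgt⟩
    refine ⟨g⁻¹, inv_mem hg, ?_⟩
    have h : (g : M2R) * (cos (-t) • 1 + sin (-t) • J) = 1 := by
      rw [hgt, cos_neg, sin_neg]
      simp only [Matrix.add_mul, Matrix.mul_add, Matrix.smul_mul, Matrix.mul_smul, Matrix.one_mul,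
        Matrix.mul_one, hJ]
      linear_combination (norm := module) sin_sq_add_cos_sq t • (1 : M2R)
    calc ((g⁻¹ : SL2R) : M2R) = ((g⁻¹ : SL2R) : M2R) * (g * (cos (-t) • 1 + sin (-t) • J)) := by
          rw [h, Matrix.mul_one]
      _ = cos (-t) • 1 + sin (-t) • J := by
          rw [← Matrix.mul_assoc, coe_inv_mul_coe, Matrix.one_mul]

theorem finite_rotationAngles_inter (G : Subgroup SL2R) [ProperlyDiscontinuousSMul G ℍ] {J : M2R}
    (hJ : J * J = -1) (hJ_trace : J.trace = 0) :
    (rotationAngles G hJ ∩ Set.Ioo 0 π : Set ℝ).Finite := by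
  have hfin := (finite_mem_and_norm_anti_le G ‖anti J‖).image
    (fun g : SL2R ↦ (g : M2R))
  refine Set.Finite.of_finite_image (f := fun t ↦ cos t • (1 : M2R) + sin t • J)
    (hfin.subset ?_) ?_
  · rintro _ ⟨t, ⟨⟨g, hg, hgt⟩, -⟩, rfl⟩
    refine ⟨g, ⟨hg, ?_⟩, hgt⟩
    rw [hgt, map_add, map_smul, map_smul, anti_one, smul_zero, zero_add, norm_smul]
    exact mul_le_of_le_one_left (norm_nonneg _) (abs_sin_le_one t)
  · rintro s ⟨-, hs⟩ t ⟨-, ht⟩ hst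
    have hcos := congrArg Matrix.trace hst
    simp only [Matrix.trace_add, Matrix.trace_smul, hJ_trace, Matrix.trace_one] at hcos
    exact injOn_cos ⟨hs.1.le, hs.2.le⟩ ⟨ht.1.le, ht.2.le⟩ (by simpa using hcos)

theorem coe_pow_eq_of_coe_eq {g : SL2R} {J : M2R} {t : ℝ} (hJ : J * J = -1)
    (hg : (g : M2R) = cos t • 1 + sin t • J) (k : ℕ) :
    ((g ^ k : SL2R) : M2R) = cos (k * t) • 1 + sin (k * t) • J := by
  induction k with
  | zero => simp
  | succ k ih =>
    rw [pow_succ, Matrix.SpecialLinearGroup.coe_mul, ih, hg, Nat.cast_succ, add_one_mul, cos_add,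
      sin_add]
    simp only [Matrix.add_mul, Matrix.mul_add, Matrix.smul_mul, Matrix.mul_smul, Matrix.one_mul,
      Matrix.mul_one, hJ]
    module

theorem traceless_mul_self (M : M2R) :
    traceless M * traceless M = ((M.trace / 2) ^ 2 - M.det) • (1 : M2R) := by
  rw [traceless_apply]
  simp only [Matrix.sub_mul, Matrix.mul_sub, Matrix.smul_mul, Matrix.mul_smul, Matrix.one_mul,
    Matrix.mul_one]
  linear_combination (norm := module) mul_self_eq_trace_smul_sub_det_smul M

theorem exists_eq_two_mul_cos {x : ℝ} (hx : x ^ 2 < 4) : ∃ θ, 0 < θ ∧ θ < π ∧ x = 2 * cos θ := by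
  obtain ⟨h1, h2⟩ : -1 < x / 2 ∧ x / 2 < 1 := by
    rw [← abs_lt, ← sq_lt_one_iff_abs_lt_one]
    linarith
  exact ⟨arccos (x / 2), arccos_pos.mpr h2, arccos_lt_pi.mpr h1, by
    rw [cos_arccos h1.le h2.le, mul_div_cancel₀ _ two_ne_zero]⟩

theorem trace_cos_smul_one_add_sin_smul {J : M2R} (hJ : J.trace = 0) (t : ℝ) :
    (cos t • (1 : M2R) + sin t • J).trace = 2 * cos t := by
  simp [hJ, mul_comm]

theorem traceless_cos_smul_one_add_sin_smul {J : M2R} (hJ : J.trace = 0) (t : ℝ) :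
    traceless (cos t • (1 : M2R) + sin t • J) = sin t • J := by
  rw [traceless_apply, trace_cos_smul_one_add_sin_smul hJ]
  module

theorem exists_eq_cos_smul_one_add_sin_smul {A : SL2R} (hA : (A : M2R).trace ^ 2 < 4) :
    ∃ θ J, 0 < θ ∧ θ < π ∧ J.trace = 0 ∧ J * J = -1 ∧ (A : M2R) = cos θ • 1 + sin θ • J := by
  obtain ⟨θ, hθ0, hθπ, hθ⟩ := exists_eq_two_mul_cos hA
  have hsin : sin θ ≠ 0 := (sin_pos_of_pos_of_lt_pi hθ0 hθπ).ne'
  refine ⟨θ, (sin θ)⁻¹ • traceless A, hθ0, hθπ, by simp [trace_traceless], ?_, ?_⟩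
  · rw [Matrix.smul_mul, Matrix.mul_smul, traceless_mul_self, A.det_coe, hθ, smul_smul,
      smul_smul, mul_div_cancel_left₀ _ two_ne_zero, ← neg_sub, ← sin_sq,
      show (sin θ)⁻¹ * (sin θ)⁻¹ * -sin θ ^ 2 = -1 by field_simp, neg_one_smul]
  · rw [smul_inv_smul₀ hsin, traceless_apply, hθ]
    module

theorem exists_primitive_rotation {G : Subgroup SL2R} [ProperlyDiscontinuousSMul G ℍ] {A : SL2R}
    (hG : -1 ∈ G) (hA : A ∈ G) (hA_elliptic : (A : M2R).trace ^ 2 < 4) :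
    ∃ n p : ℕ, 0 < p ∧ p < n ∧ (A : M2R).trace = 2 * cos (p * π / n) ∧
      ∃ R ∈ G, A ∈ Subgroup.zpowers R ∧ (R : M2R).trace = 2 * cos (π / n) ∧
        traceless R = (sin (π / n) / sin (p * π / n)) • traceless A := by
  obtain ⟨θ, J, hθ0, hθπ, hJ_trace, hJ, hA_coe⟩ := exists_eq_cos_smul_one_add_sin_smul hA_elliptic
  have hθH : θ ∈ rotationAngles G hJ := ⟨A, hA, hA_coe⟩
  have hπH : π ∈ rotationAngles G hJ := ⟨-1, hG, by simp⟩
  obtain ⟨n, hn, hH⟩ := exists_eq_zmultiples_div_of_finite pi_pos hπH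
    (finite_rotationAngles_inter G hJ hJ_trace)
  obtain ⟨p, hp⟩ := AddSubgroup.mem_zmultiples_iff.mp (hH ▸ hθH)
  rw [zsmul_eq_mul] at hp
  have hn' : (0 : ℝ) < n := by exact_mod_cast hn
  have hp0 : 0 < p := by
    have : (0 : ℝ) < p := pos_of_mul_pos_left (hp.symm ▸ hθ0) (by positivity)
    exact_mod_cast this
  lift p to ℕ using hp0.le
  rw [Int.cast_natCast, ← mul_div_assoc] at hp
  have hpn : p < n := by
    rw [← hp, div_lt_iff₀ hn', mul_comm, mul_lt_mul_iff_right₀ pi_pos] at hθπ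
    exact_mod_cast hθπ
  obtain ⟨R, hRG, hR⟩ : π / n ∈ rotationAngles G hJ :=
    hH ▸ AddSubgroup.mem_zmultiples (π / n)
  have hAR : R ^ p = A := by
    apply Subtype.ext
    rw [coe_pow_eq_of_coe_eq hJ hR, hA_coe, ← mul_div_assoc, hp]
  have hsin : sin θ ≠ 0 := (sin_pos_of_pos_of_lt_pi hθ0 hθπ).ne'
  refine ⟨n, p, by exact_mod_cast hp0, hpn, ?_, R, hRG, hAR ▸ Subgroup.npow_mem_zpowers R p, ?_, ?_⟩
  · rw [hp, hA_coe, trace_cos_smul_one_add_sin_smul hJ_trace]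
  · rw [hR, trace_cos_smul_one_add_sin_smul hJ_trace]
  · rw [hp, hR, hA_coe, traceless_cos_smul_one_add_sin_smul hJ_trace,
      traceless_cos_smul_one_add_sin_smul hJ_trace, smul_smul, div_mul_cancel₀ _ hsin]

/-! ### Hyperbolic triangles with angles `π / n` -/

theorem cos_pi_div_seven_gt : 0.899 < cos (π / 7) := by
  have h := one_sub_sq_div_two_le_cos (x := π / 7)
  nlinarith [pi_gt_three, pi_lt_d4]

theorem cos_pi_div_seven_lt : cos (π / 7) < 0.902 := by
  have h := (abs_le.mp (cos_bound (x := π / 7) (by rw [abs_le]; constructor <;>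
    linarith [pi_pos, pi_lt_d4]))).2
  have hsq : 3.1415 / 7 < π / 7 ∧ π / 7 < 3.1416 / 7 :=
    ⟨by linarith [pi_gt_d4], by linarith [pi_lt_d4]⟩
  rw [abs_of_pos (by positivity)] at h
  have h4 : (π / 7) ^ 4 ≤ (3.1416 / 7) ^ 4 := by
    have := hsq.2.le
    gcongr
  have h2 : (3.1415 / 7) ^ 2 ≤ (π / 7) ^ 2 := by
    have := hsq.1.le
    gcongr
  norm_num at h4 h2
  linarith

theorem cos_pi_div_seven_le {n : ℕ} (hn : 7 ≤ n) : cos (π / 7) ≤ cos (π / n) := by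
  have hn' : (7 : ℝ) ≤ n := by exact_mod_cast hn
  refine cos_le_cos_of_nonneg_of_le_pi (by positivity) ?_ (by gcongr)
  linarith [pi_pos]

theorem cos_two_pi_div_five : cos (2 * π / 5) = (√5 - 1) / 4 := by
  rw [mul_div_assoc, cos_two_mul, cos_pi_div_five]
  linear_combination Real.sq_sqrt (show (0 : ℝ) ≤ 5 by norm_num) / 8

theorem sin_le_sin_of_add_le_pi {s t : ℝ} (hs : 0 ≤ s) (hst : s ≤ t) (h : s + t ≤ π) :
    sin s ≤ sin t := by
  rw [← sub_nonneg, sin_sub_sin]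
  have h1 : 0 ≤ sin ((t - s) / 2) :=
    sin_nonneg_of_nonneg_of_le_pi (by linarith) (by linarith)
  have h2 : 0 ≤ cos ((t + s) / 2) :=
    cos_nonneg_of_neg_pi_div_two_le_of_le (by linarith) (by linarith)
  positivity

/-- Up to sign the determinant of the Gram matrix of a triangle whose angles have cosines `x`, `y`,
`z`; it is positive for hyperbolic triangles and zero for Euclidean ones. -/
def triangleForm (x y z : ℝ) : ℝ :=
  x ^ 2 + y ^ 2 + z ^ 2 + 2 * x * y * z - 1

theorem triangleForm_comm (x y z : ℝ) : triangleForm x y z = triangleForm y x z := by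
  rw [triangleForm, triangleForm]
  ring

theorem triangleForm_rotate (x y z : ℝ) : triangleForm x y z = triangleForm y z x := by
  rw [triangleForm, triangleForm]
  ring

theorem cos_pi_div_cases {n : ℕ} (hn : n ∈ Set.Icc 2 6) : cos (π / n) = 0 ∨ cos (π / n) = 1 / 2 ∨
    cos (π / n) = √2 / 2 ∨ cos (π / n) = (1 + √5) / 4 ∨ cos (π / n) = √3 / 2 := by
  obtain ⟨h2, h6⟩ := hn
  interval_cases n <;> push_cast
  · exact .inl cos_pi_div_two
  · exact .inr (.inl cos_pi_div_three)
  · exact .inr (.inr (.inl cos_pi_div_four))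
  · exact .inr (.inr (.inr (.inl cos_pi_div_five)))
  · exact .inr (.inr (.inr (.inr cos_pi_div_six)))

theorem cos_pi_div_eq_or_ge {n : ℕ} (hn : n ∈ Set.Icc 2 6) :
    cos (π / n) = 0 ∨ cos (π / n) = 1 / 2 ∨ 0.7 ≤ cos (π / n) := by
  have h2 : 1.4 ≤ √2 := Real.le_sqrt_of_sq_le (by norm_num)
  have h3 : 1.4 ≤ √3 := Real.le_sqrt_of_sq_le (by norm_num)
  have h5 : 2 ≤ √5 := Real.le_sqrt_of_sq_le (by norm_num)
  rcases cos_pi_div_cases hn with h | h | h | h | h <;> rw [h]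
  · exact .inl rfl
  · exact .inr (.inl rfl)
  all_goals exact .inr (.inr (by linarith))

theorem cos_pi_div_nonneg {n : ℕ} (hn : 2 ≤ n) : 0 ≤ cos (π / n) := by
  have hn' : (2 : ℝ) ≤ n := by exact_mod_cast hn
  refine cos_nonneg_of_neg_pi_div_two_le_of_le ?_ (by gcongr)
  have : 0 ≤ π / n := by positivity
  linarith [pi_pos]

theorem sq_cos_pi_div_cases {n : ℕ} (hn : n ∈ Set.Icc 2 6) :
    cos (π / n) ^ 2 = 0 ∨ cos (π / n) ^ 2 = 1 / 4 ∨ cos (π / n) ^ 2 = 1 / 2 ∨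
      cos (π / n) ^ 2 = (3 + √5) / 8 ∨ cos (π / n) ^ 2 = 3 / 4 := by
  have h5 := Real.sq_sqrt (show (0 : ℝ) ≤ 5 by norm_num)
  rcases cos_pi_div_cases hn with h | h | h | h | h <;> rw [h]
  · exact .inl (by norm_num)
  · exact .inr (.inl (by norm_num))
  · exact .inr (.inr (.inl (by rw [div_pow, Real.sq_sqrt] <;> norm_num)))
  · exact .inr (.inr (.inr (.inl (by linear_combination h5 / 16))))
  · exact .inr (.inr (.inr (.inr (by rw [div_pow, Real.sq_sqrt] <;> norm_num))))

theorem sq_cos_pi_div_le {n : ℕ} (hn : n ∈ Set.Icc 2 6) : cos (π / n) ^ 2 ≤ 3 / 4 := by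
  have h5 : √5 < 3 := (Real.sqrt_lt' (by norm_num)).mpr (by norm_num)
  rcases sq_cos_pi_div_cases hn with h | h | h | h | h <;> linarith

theorem sq_cos_add_sq_cos_le_or_ge {m n : ℕ} (hm : m ∈ Set.Icc 2 6) (hn : n ∈ Set.Icc 2 6) :
    cos (π / m) ^ 2 + cos (π / n) ^ 2 ≤ 1 ∨ 1.15 ≤ cos (π / m) ^ 2 + cos (π / n) ^ 2 := by
  have h5 : 2.23 < √5 ∧ √5 < 2.24 :=
    ⟨Real.lt_sqrt_of_sq_lt (by norm_num), (Real.sqrt_lt' (by norm_num)).mpr (by norm_num)⟩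
  rcases sq_cos_pi_div_cases hm with h | h | h | h | h <;>
    rcases sq_cos_pi_div_cases hn with h' | h' | h' | h' | h' <;> rw [h, h'] <;>
    first
    | exact .inl (by linarith)
    | exact .inr (by linarith)

theorem triangleForm_cos_le_zero_or_ge_of_eq_zero {l m n : ℕ} (hl : cos (π / l) = 0)
    (hm : m ∈ Set.Icc 2 6) (hn : n ∈ Set.Icc 2 6) :
    triangleForm (cos (π / l)) (cos (π / m)) (cos (π / n)) ≤ 0 ∨
      0.15 ≤ triangleForm (cos (π / l)) (cos (π / m)) (cos (π / n)) := by
  rw [triangleForm, hl]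
  exact (sq_cos_add_sq_cos_le_or_ge hm hn).imp (fun h ↦ by linarith) fun h ↦ by linarith

theorem triangleForm_ge {x y z : ℝ} (hx : 1 / 2 ≤ x) (hy : 1 / 2 ≤ y) (hz : 0.7 ≤ z) :
    0.15 ≤ triangleForm x y z := by
  have hx2 : (1 / 2) ^ 2 ≤ x ^ 2 := by gcongr
  have hy2 : (1 / 2) ^ 2 ≤ y ^ 2 := by gcongr
  have hz2 : 0.7 ^ 2 ≤ z ^ 2 := by gcongr
  have hxyz : 1 / 2 * (1 / 2) * 0.7 ≤ x * y * z := by gcongr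
  rw [triangleForm]
  linarith

theorem triangleForm_cos_le_zero_or_ge {l m n : ℕ} (hl : l ∈ Set.Icc 2 6) (hm : m ∈ Set.Icc 2 6)
    (hn : n ∈ Set.Icc 2 6) :
    triangleForm (cos (π / l)) (cos (π / m)) (cos (π / n)) ≤ 0 ∨
      0.15 ≤ triangleForm (cos (π / l)) (cos (π / m)) (cos (π / n)) := by
  by_cases hl0 : cos (π / l) = 0
  · exact triangleForm_cos_le_zero_or_ge_of_eq_zero hl0 hm hn
  by_cases hm0 : cos (π / m) = 0
  · rw [triangleForm_rotate]
    exact triangleForm_cos_le_zero_or_ge_of_eq_zero hm0 hn hl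
  by_cases hn0 : cos (π / n) = 0
  · rw [← triangleForm_rotate]
    exact triangleForm_cos_le_zero_or_ge_of_eq_zero hn0 hl hm
  have hl' := (cos_pi_div_eq_or_ge hl).resolve_left hl0
  have hm' := (cos_pi_div_eq_or_ge hm).resolve_left hm0
  have hn' := (cos_pi_div_eq_or_ge hn).resolve_left hn0
  have hge : ∀ {x : ℝ}, x = 1 / 2 ∨ 0.7 ≤ x → 1 / 2 ≤ x := fun h ↦ by
    rcases h with h | h <;> linarith
  rcases hn'.symm with hn7 | hn2
  · exact .inr (triangleForm_ge (hge hl') (hge hm') hn7)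
  rcases hm'.symm with hm7 | hm2
  · rw [← triangleForm_rotate]
    exact .inr (triangleForm_ge (hge hn') (hge hl') hm7)
  rcases hl'.symm with hl7 | hl2
  · rw [triangleForm_rotate]
    exact .inr (triangleForm_ge (hge hm') (hge hn') hl7)
  · left
    norm_num [triangleForm, hl2, hm2, hn2]

theorem cos_two_pi_div_five_bounds : 0.309 < cos (2 * π / 5) ∧ cos (2 * π / 5) < 0.3091 := by
  rw [cos_two_pi_div_five]
  have h1 : 2.236 < √5 := Real.lt_sqrt_of_sq_lt (by norm_num)
  have h2 : √5 < 2.2361 := (Real.sqrt_lt' (by norm_num)).mpr (by norm_num)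
  constructor <;> linarith

theorem triangleForm_cos_two_pi_div_five {m n : ℕ} (hm : m ∈ Set.Icc 2 6) (hn : n ∈ Set.Icc 2 6) :
    triangleForm (cos (π / m)) (cos (π / n)) (cos (2 * π / 5)) ≤ 0 ∨
      0.036 * (2.036 - cos (π / m) ^ 2 - cos (π / n) ^ 2) ≤
        triangleForm (cos (π / m)) (cos (π / n)) (cos (2 * π / 5)) := by
  obtain ⟨h1, h2⟩ := cos_two_pi_div_five_bounds
  have hm2 := sq_cos_pi_div_le hm
  have hn2 := sq_cos_pi_div_le hn
  rw [triangleForm]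
  set x := cos (π / m)
  set y := cos (π / n)
  have hxy : x * y = 0 ∧ x ^ 2 + y ^ 2 ≤ 3 / 4 ∨ x * y = 1 / 4 ∧ x ^ 2 + y ^ 2 = 1 / 2 ∨
      0.35 ≤ x * y ∧ 0.74 ≤ x ^ 2 + y ^ 2 := by
    rcases cos_pi_div_eq_or_ge hm with hx | hx | hx
    · exact .inl (by constructor <;> nlinarith)
    · rcases cos_pi_div_eq_or_ge hn with hy | hy | hy
      · exact .inl (by constructor <;> nlinarith)
      · exact .inr (.inl (by constructor <;> nlinarith))
      · exact .inr (.inr (by constructor <;> nlinarith))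
    · rcases cos_pi_div_eq_or_ge hn with hy | hy | hy
      · exact .inl (by constructor <;> nlinarith)
      · exact .inr (.inr (by constructor <;> nlinarith))
      · exact .inr (.inr (by constructor <;> nlinarith))
  rcases hxy with ⟨hp, hs⟩ | ⟨hp, hs⟩ | ⟨hp, hs⟩
  · exact .inl (by nlinarith)
  · exact .inl (by nlinarith)
  · exact .inr (by nlinarith)

theorem triangleForm_neg_cos_two_pi_div_five_le_zero {n : ℕ} {x : ℝ} (hx : x = 1 / 2 ∨ x = √2 / 2)
    (hn : n ∈ Set.Icc 2 6) (hn0 : cos (π / n) ≠ 0) :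
    triangleForm x (cos (π / n)) (-cos (2 * π / 5)) ≤ 0 := by
  obtain ⟨h1, h2⟩ := cos_two_pi_div_five_bounds
  have hn2 := sq_cos_pi_div_le hn
  have hsqrt : 1.414 < √2 := Real.lt_sqrt_of_sq_lt (by norm_num)
  have hy := (cos_pi_div_eq_or_ge hn).resolve_left hn0
  rw [triangleForm]
  set y := cos (π / n)
  set c := cos (2 * π / 5)
  have hy_ge : 1 / 2 ≤ y := by rcases hy with hy | hy <;> linarith
  rcases hx with rfl | rfl
  · nlinarith
  · have hcy : 1.414 * 0.309 * y ≤ √2 * c * y := by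
      have := hsqrt.le
      gcongr
    have hy_le : y ≤ 0.8661 := by nlinarith
    nlinarith [Real.sq_sqrt (show (0 : ℝ) ≤ 2 by norm_num), mul_nonneg (sub_nonneg.mpr hy_ge)
      (sub_nonneg.mpr hy_le)]

theorem triangleForm_neg_cos_two_pi_div_five_ge {x y : ℝ} (hx : 0.8 ≤ x) (hy : 0.86 ≤ y) :
    0.036 * (2.036 - x ^ 2 - y ^ 2) ≤ triangleForm x y (-cos (2 * π / 5)) := by
  obtain ⟨h1, h2⟩ := cos_two_pi_div_five_bounds
  rw [triangleForm]
  have hxy : 0.8 * 0.86 ≤ x * y := by gcongr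
  nlinarith [sq_nonneg (x - y)]

theorem triangleForm_neg_cos_two_pi_div_five {m n : ℕ} (hm : m ∈ Set.Icc 2 6)
    (hn : n ∈ Set.Icc 2 6) (hm0 : cos (π / m) ≠ 0) (hn0 : cos (π / n) ≠ 0) :
    triangleForm (cos (π / m)) (cos (π / n)) (-cos (2 * π / 5)) ≤ 0 ∨
      0.036 * (2.036 - cos (π / m) ^ 2 - cos (π / n) ^ 2) ≤
        triangleForm (cos (π / m)) (cos (π / n)) (-cos (2 * π / 5)) := by
  have hsplit : ∀ {k : ℕ}, k ∈ Set.Icc 2 6 → cos (π / k) ≠ 0 →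
      (cos (π / k) = 1 / 2 ∨ cos (π / k) = √2 / 2) ∨
        cos (π / k) = (1 + √5) / 4 ∨ 0.86 ≤ cos (π / k) := fun hk hk0 ↦ by
    have h3 : 1.72 < √3 := Real.lt_sqrt_of_sq_lt (by norm_num)
    rcases (cos_pi_div_cases hk).resolve_left hk0 with h | h | h | h
    · exact .inl (.inl h)
    · exact .inl (.inr h)
    · exact .inr (.inl h)
    · exact .inr (.inr (by linarith))
  have h5 : 2.2 < √5 := Real.lt_sqrt_of_sq_lt (by norm_num)
  rcases hsplit hm hm0 with hx | hx
  · exact .inl (triangleForm_neg_cos_two_pi_div_five_le_zero hx hn hn0)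
  rcases hsplit hn hn0 with hy | hy
  · rw [triangleForm_comm]
    exact .inl (triangleForm_neg_cos_two_pi_div_five_le_zero hy hm hm0)
  rcases hx with hx | hx
  · rcases hy with hy | hy
    · left
      rw [triangleForm, hx, hy, cos_two_pi_div_five]
      nlinarith [Real.sq_sqrt (show (0 : ℝ) ≤ 5 by norm_num)]
    · exact .inr (triangleForm_neg_cos_two_pi_div_five_ge (by linarith) hy)
  · rw [triangleForm_comm, sub_right_comm]
    refine .inr (triangleForm_neg_cos_two_pi_div_five_ge ?_ hx)
    rcases hy with hy | hy <;> linarith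

theorem triangleForm_of_cos_pi_div_seven_le {m n : ℕ} {c : ℝ} (hm : m ∈ Set.Icc 2 6)
    (hn : n ∈ Set.Icc 2 6) (hc : cos (π / 7) ≤ c) :
    cos (π / m) = 0 ∧ cos (π / n) = 0 ∨
      cos (π / m) * cos (π / n) = 0 ∧ cos (π / m) ^ 2 + cos (π / n) ^ 2 = 1 / 4 ∨
      0.15 ≤ triangleForm (cos (π / m)) (cos (π / n)) c := by
  have hc2 : 0.899 ^ 2 ≤ c ^ 2 := by
    have := cos_pi_div_seven_gt.le.trans hc
    gcongr
  have hm0 := cos_pi_div_nonneg hm.1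
  have hn0 := cos_pi_div_nonneg hn.1
  have hmn : 0 ≤ 2 * cos (π / m) * cos (π / n) * c :=
    mul_nonneg (by positivity) (by linarith [cos_pi_div_seven_gt])
  rw [triangleForm]
  rcases cos_pi_div_eq_or_ge hm with hx | hx | hx
  · rcases cos_pi_div_eq_or_ge hn with hy | hy | hy
    · exact .inl ⟨hx, hy⟩
    · exact .inr (.inl (by norm_num [hx, hy]))
    · exact .inr (.inr (by nlinarith))
  · rcases cos_pi_div_eq_or_ge hn with hy | hy | hy
    · exact .inr (.inl (by norm_num [hx, hy]))
    · refine .inr (.inr ?_)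
      rw [hx, hy]
      linarith [cos_pi_div_seven_gt]
    · exact .inr (.inr (by nlinarith))
  · exact .inr (.inr (by nlinarith [sq_nonneg (cos (π / n))]))

/-! ### Yamada's constant -/

/-- The square of `sinh (μ / 2)`, where `μ` is Yamada's bound `0.2629…`. -/
def yamadaConst : ℝ :=
  (2 * cos (2 * π / 7) - 1) / (8 * cos (π / 7) + 7)

theorem yamadaConst_mul :
    yamadaConst * (7 / 4 + 2 * cos (π / 7)) = cos (π / 7) ^ 2 - 3 / 4 := by
  have h : 8 * cos (π / 7) + 7 ≠ 0 := by linarith [cos_pi_div_seven_gt]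
  rw [yamadaConst, mul_div_assoc 2 π, cos_two_mul, div_mul_eq_mul_div, div_eq_iff h]
  ring

theorem yamadaConst_pos : 0 < yamadaConst := by
  nlinarith [yamadaConst_mul, cos_pi_div_seven_gt]

theorem yamadaConst_lt : yamadaConst < 0.018 := by
  nlinarith [yamadaConst_mul, cos_pi_div_seven_gt, cos_pi_div_seven_lt]

/- The defining property of `δ = yamadaConst` is `(1 + δ) * (3 / 4 + δ) = (cos (π / 7) - δ) ^ 2`. -/
theorem yamadaConst_mul_sq_add_lt {s t x y : ℝ} (hs : s ^ 2 < 1 - x ^ 2 + yamadaConst)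
    (ht : t ^ 2 < 1 - y ^ 2 + yamadaConst) (hxy : x * y = 0) (hsum : x ^ 2 + y ^ 2 = 1 / 4) :
    yamadaConst * (s + t) ^ 2 < cos (π / 7) ^ 2 - 3 / 4 := by
  have hδ := yamadaConst_mul
  have hst : s * t ≤ cos (π / 7) - yamadaConst := by
    refine abs_le_of_sq_le_sq' ?_ (by linarith [cos_pi_div_seven_gt, yamadaConst_lt]) |>.2
    calc (s * t) ^ 2 = s ^ 2 * t ^ 2 := mul_pow ..
      _ ≤ (1 - x ^ 2 + yamadaConst) * (1 - y ^ 2 + yamadaConst) :=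
        mul_le_mul hs.le ht.le (sq_nonneg _) ((sq_nonneg s).trans hs.le)
      _ = (1 + yamadaConst) * (3 / 4 + yamadaConst) := by
        linear_combination (x * y) * hxy - (1 + yamadaConst) * hsum
      _ = (cos (π / 7) - yamadaConst) ^ 2 := by linear_combination hδ
  rw [← hδ]
  have := yamadaConst_pos
  gcongr
  linarith

theorem two_mul_cos_mul_sin_le_sin {p q : ℕ} (hp : 2 ≤ p) (hpq : p + 2 ≤ q) :
    2 * cos (π / q) * sin (π / q) ≤ sin (p * π / q) := by
  have hp' : (2 : ℝ) ≤ p := by exact_mod_cast hp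
  have hpq' : (p : ℝ) + 2 ≤ q := by exact_mod_cast hpq
  have hq : (0 : ℝ) < q := by linarith
  rw [mul_right_comm, ← sin_two_mul, mul_div_assoc]
  refine sin_le_sin_of_add_le_pi (by positivity) (by gcongr) ?_
  rw [← add_mul, ← mul_div_assoc, div_le_iff₀ hq]
  nlinarith [pi_pos]

theorem sin_pi_div_le_sin {p q : ℕ} (hp : 0 < p) (hpq : p < q) :
    sin (π / q) ≤ sin (p * π / q) := by
  have hp' : (1 : ℝ) ≤ p := by exact_mod_cast hp
  have hpq' : (p : ℝ) + 1 ≤ q := by exact_mod_cast hpq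
  have hq : (0 : ℝ) < q := by linarith
  rw [mul_div_assoc]
  refine sin_le_sin_of_add_le_pi (by positivity) (le_mul_of_one_le_left (by positivity) hp') ?_
  rw [← one_add_mul, ← mul_div_assoc, div_le_iff₀ hq]
  nlinarith [pi_pos]

theorem three_mul_lt_of_lt_cos {p q : ℕ} (hpq : p < q) (h : -1 / 2 < cos (p * π / q)) :
    3 * p < 2 * q := by
  contrapose! h
  have h' : (2 : ℝ) * q ≤ 3 * p := by exact_mod_cast h
  have hpq' : (p : ℝ) ≤ q := by exact_mod_cast hpq.le
  have hq : (0 : ℝ) < q := by exact_mod_cast hpq.bot_lt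
  calc cos (p * π / q) ≤ cos (π - π / 3) := by
        refine cos_le_cos_of_nonneg_of_le_pi (by linarith [pi_pos]) ?_ ?_
        · rw [div_le_iff₀ hq]
          nlinarith [pi_pos]
        · rw [le_div_iff₀ hq]
          nlinarith [pi_pos]
    _ = -1 / 2 := by rw [cos_pi_sub, cos_pi_div_three, neg_div]

theorem cos_pi_div_lt_one {n : ℕ} (hn : 2 ≤ n) : cos (π / n) < 1 := by
  have hn' : (2 : ℝ) ≤ n := by exact_mod_cast hn
  rw [← cos_zero]
  refine cos_lt_cos_of_nonneg_of_le_pi le_rfl ?_ (by positivity)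
  exact div_le_self pi_pos.le (by linarith)

theorem sq_trace_lt_four_of_eq_cos {n : ℕ} (hn : 2 ≤ n) {R : SL2R}
    (hR : (R : M2R).trace = 2 * cos (π / n)) : (R : M2R).trace ^ 2 < 4 := by
  rw [hR]
  nlinarith [cos_pi_div_nonneg hn, cos_pi_div_lt_one hn]

theorem exists_primitive_rotation_im_pos {G : Subgroup SL2R} [ProperlyDiscontinuousSMul G ℍ]
    {A : SL2R} (hG : -1 ∈ G) (hA : A ∈ G) (hA_elliptic : (A : M2R).trace ^ 2 < 4) :
    ∃ n : ℕ, 2 ≤ n ∧ ∃ R ∈ G, A ∈ Subgroup.zpowers R ∧ (R : M2R).trace = 2 * cos (π / n) ∧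
      0 < (conf R).im ∧ ‖anti R‖ ≤ ‖anti A‖ := by
  obtain ⟨n, p, hp0, hpn, -, R, hRG, hAR, hR_trace, hR⟩ :=
    exists_primitive_rotation hG hA hA_elliptic
  have hn : 2 ≤ n := by lia
  have hn' : (2 : ℝ) ≤ n := by exact_mod_cast hn
  have hπn : π / n < π := div_lt_self pi_pos (by linarith)
  have hsin : 0 < sin (π / n) := sin_pos_of_pos_of_lt_pi (by positivity) hπn
  have hanti : ‖anti R‖ ≤ ‖anti A‖ := by
    have hle := sin_pi_div_le_sin hp0 hpn
    rw [← anti_traceless R, hR, map_smul, anti_traceless, norm_smul, Real.norm_of_nonneg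
      (div_nonneg hsin.le (hsin.le.trans hle))]
    exact mul_le_of_le_one_left (norm_nonneg _) (div_le_one_of_le₀ hle (hsin.le.trans hle))
  have him : (conf R).im ≠ 0 := by
    have h := sq_im_conf R
    rw [hR_trace, mul_div_cancel_left₀ _ two_ne_zero, ← sin_sq] at h
    rw [← sq_pos_iff, h]
    positivity
  rcases him.lt_or_gt with hneg | hpos
  · refine ⟨n, hn, R⁻¹, inv_mem hRG, by rwa [Subgroup.zpowers_inv], ?_, ?_, ?_⟩
    · rwa [Matrix.SpecialLinearGroup.coe_inv, trace_eq_two_mul_re_conf, conf_adjugate,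
        Complex.conj_re, ← trace_eq_two_mul_re_conf]
    · rwa [Matrix.SpecialLinearGroup.coe_inv, conf_adjugate, Complex.conj_im, neg_pos]
    · rwa [Matrix.SpecialLinearGroup.coe_inv, anti_adjugate, norm_neg]
  · exact ⟨n, hn, R, hRG, hAR, hR_trace, hpos, hanti⟩

theorem lt_seven_of_commParam_le {G : Subgroup SL2R} [ProperlyDiscontinuousSMul G ℍ] {A E R : SL2R}
    (hA : A ∈ G) (hR : R ∈ G) {p q : ℕ} (hp : 2 ≤ p) (hpq : p + 2 ≤ q)
    (hR_trace : (R : M2R).trace = 2 * cos (π / q))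
    (hR_traceless : traceless R = (sin (π / q) / sin (p * π / q)) • traceless E)
    (hpos : 0 < commParam E A) (hle : commParam E A ≤ 0.294) : q < 7 := by
  by_contra! hq
  have hq' : (7 : ℝ) ≤ q := by exact_mod_cast hq
  have hsin : 0 < sin (π / q) :=
    sin_pos_of_pos_of_lt_pi (by positivity) (div_lt_self pi_pos (by linarith))
  have hsin' : sin (π / q) ≤ sin (p * π / q) := sin_pi_div_le_sin (by lia) (by lia)
  set κ := sin (π / q) / sin (p * π / q)
  have hκ : 0 < κ := div_pos hsin (hsin.trans_le hsin')
  have hcos := cos_pi_div_seven_gt.le.trans (cos_pi_div_seven_le hq)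
  have hκcos : 2 * cos (π / q) * κ ≤ 1 := by
    rw [← mul_div_assoc]
    exact div_le_one_of_le₀ (two_mul_cos_mul_sin_le_sin hp hpq) (hsin.le.trans hsin')
  have hjorgensen := one_le_commParam_add hR hA (sq_trace_lt_four_of_eq_cos (by lia) hR_trace)
    (by rw [commParam_eq_of_traceless hR_traceless]; positivity)
  rw [commParam_eq_of_traceless hR_traceless, hR_trace] at hjorgensen
  have hκ_le : κ ≤ 0.56 := by nlinarith
  nlinarith

theorem half_trace_cases_of_commParam_le {G : Subgroup SL2R} [ProperlyDiscontinuousSMul G ℍ]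
    {A E : SL2R} (hG : -1 ∈ G) (hA : A ∈ G) (hE : E ∈ G) (hE_elliptic : (E : M2R).trace ^ 2 < 4)
    (hE_trace : -1 / 2 < (E : M2R).trace / 2) (hpos : 0 < commParam E A)
    (hle : commParam E A ≤ 0.294) :
    (∃ q : ℕ, q ∈ Set.Icc 2 6 ∧ (E : M2R).trace / 2 = cos (π / q)) ∨
      (E : M2R).trace / 2 = cos (2 * π / 5) ∨ (E : M2R).trace / 2 = -cos (2 * π / 5) ∨
      cos (π / 7) ≤ (E : M2R).trace / 2 := by
  obtain ⟨q, p, hp0, hpq, htr, R, hRG, -, hR_trace, hR⟩ :=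
    exists_primitive_rotation hG hE hE_elliptic
  rw [htr, mul_div_cancel_left₀ _ two_ne_zero] at hE_trace ⊢
  have h3p := three_mul_lt_of_lt_cos hpq hE_trace
  rcases (show p = 1 ∨ 2 ≤ p by lia) with rfl | hp2
  · rw [Nat.cast_one, one_mul]
    rcases le_or_gt 7 q with hq | hq
    · exact .inr (.inr (.inr (cos_pi_div_seven_le hq)))
    · exact .inl ⟨q, ⟨hpq, Nat.lt_succ_iff.mp hq⟩, rfl⟩
  have hq := lt_seven_of_commParam_le hA hRG hp2 (by lia) hR_trace hR hpos hle
  obtain ⟨rfl, rfl⟩ | ⟨rfl, rfl⟩ | ⟨rfl, rfl⟩ | ⟨rfl, rfl⟩ | ⟨rfl, rfl⟩ :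
      (q = 4 ∧ p = 2) ∨ (q = 5 ∧ p = 2) ∨ (q = 5 ∧ p = 3) ∨ (q = 6 ∧ p = 2) ∨ (q = 6 ∧ p = 3) := by
    lia
  · exact .inl ⟨2, by norm_num, by congr 1; push_cast; ring⟩
  · exact .inr (.inl (by norm_num))
  · refine .inr (.inr (.inl ?_))
    rw [← cos_pi_sub]
    congr 1
    push_cast
    ring
  · exact .inl ⟨3, by norm_num, by congr 1; push_cast; ring⟩
  · exact .inl ⟨2, by norm_num, by congr 1; push_cast; ring⟩

/-! ### Two short elliptic elements -/

theorem triangleForm_elimination {m n : ℕ} {c : ℝ} (hm : m ∈ Set.Icc 2 6) (hn : n ∈ Set.Icc 2 6)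
    (hc : (∃ q : ℕ, q ∈ Set.Icc 2 6 ∧ c = cos (π / q)) ∨ c = cos (2 * π / 5) ∨
      c = -cos (2 * π / 5) ∨ cos (π / 7) ≤ c)
    (hxyc : 0 < c + cos (π / m) * cos (π / n))
    (hpos : 0 < triangleForm (cos (π / m)) (cos (π / n)) c)
    (hlt : triangleForm (cos (π / m)) (cos (π / n)) c <
      0.036 * (2.036 - cos (π / m) ^ 2 - cos (π / n) ^ 2)) :
    cos (π / m) = 0 ∧ cos (π / n) = 0 ∨ cos (π / m) * cos (π / n) = 0 ∧
      cos (π / m) ^ 2 + cos (π / n) ^ 2 = 1 / 4 ∧ cos (π / 7) ≤ c := by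
  have hlt' : triangleForm (cos (π / m)) (cos (π / n)) c < 0.15 := by
    linarith [sq_nonneg (cos (π / m)), sq_nonneg (cos (π / n))]
  rcases hc with ⟨q, hq, rfl⟩ | rfl | rfl | hc
  · rcases triangleForm_cos_le_zero_or_ge hm hn hq with h | h <;> linarith
  · rcases triangleForm_cos_two_pi_div_five hm hn with h | h <;> linarith
  · have hne : cos (π / m) * cos (π / n) ≠ 0 := by linarith [cos_two_pi_div_five_bounds.1]
    rcases triangleForm_neg_cos_two_pi_div_five hm hn (left_ne_zero_of_mul hne)
      (right_ne_zero_of_mul hne) with h | h <;> linarith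
  · rcases triangleForm_of_cos_pi_div_seven_le hm hn hc with h | ⟨h, h'⟩ | h
    · exact .inl h
    · exact .inr ⟨h, h', hc⟩
    · linarith

theorem neg_half_lt_of_triangleForm_pos {x y c : ℝ} (hx : 0 ≤ x) (hy : 0 ≤ y) (hx' : x ^ 2 ≤ 3 / 4)
    (hy' : y ^ 2 ≤ 3 / 4) (hc : 0 < c + x * y) (hpos : 0 < triangleForm x y c) : -1 / 2 < c := by
  rw [triangleForm] at hpos
  by_contra! hc2
  have hsq : (c + x * y) ^ 2 ≤ (x * y - 1 / 2) ^ 2 := by gcongr; linarith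
  have hquad : x ^ 2 + y ^ 2 - x * y ≤ 3 / 4 := by
    rcases le_total x y with hxy | hxy <;> nlinarith
  nlinarith

section Pair

variable {A B : SL2R} {x y : ℝ} (hA_trace : (A : M2R).trace = 2 * x)
  (hB_trace : (B : M2R).trace = 2 * y)

include hA_trace in
theorem sq_im_conf_of_trace_eq : (conf A).im ^ 2 = 1 - x ^ 2 + ‖anti A‖ ^ 2 := by
  rw [sq_im_conf, hA_trace, mul_div_cancel_left₀ _ two_ne_zero]

include hA_trace hB_trace

theorem commParam_eq_triangleForm :
    commParam A B = 4 * triangleForm x y (-(A * B : M2R).trace / 2) := by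
  rw [commParam_eq_trace, triangleForm, A.det_coe, B.det_coe, hA_trace, hB_trace]
  ring

variable (hA : ‖anti A‖ ^ 2 < yamadaConst) (hB : ‖anti B‖ ^ 2 < yamadaConst)
  (hA_im : 0 < (conf A).im) (hB_im : 0 < (conf B).im)

include hA hB hA_im hB_im

theorem triangleForm_lt_yamadaConst_mul : triangleForm x y (-(A * B : M2R).trace / 2) <
    yamadaConst * ((conf A).im + (conf B).im) ^ 2 := by
  have h := commParam_lt hA hB hA_im hB_im
  rw [commParam_eq_triangleForm hA_trace hB_trace] at h
  linarith

theorem triangleForm_lt_of_sq_norm_anti_lt : triangleForm x y (-(A * B : M2R).trace / 2) <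
    0.036 * (2.036 - x ^ 2 - y ^ 2) := by
  have hδ := yamadaConst_lt
  calc _ < yamadaConst * ((conf A).im + (conf B).im) ^ 2 :=
        triangleForm_lt_yamadaConst_mul hA_trace hB_trace hA hB hA_im hB_im
    _ ≤ 0.018 * (2 * ((conf A).im ^ 2 + (conf B).im ^ 2)) :=
        mul_le_mul hδ.le add_sq_le (by positivity) (by norm_num)
    _ ≤ _ := by
        rw [sq_im_conf_of_trace_eq hA_trace, sq_im_conf_of_trace_eq hB_trace]
        linarith

end Pair

theorem le_six_of_commParam_lt {G : Subgroup SL2R} [ProperlyDiscontinuousSMul G ℍ] {A B : SL2R}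
    (hA : A ∈ G) (hB : B ∈ G) {n : ℕ} (hn : 2 ≤ n) (hA_trace : (A : M2R).trace = 2 * cos (π / n))
    (hpos : 0 < commParam A B) (hlt : commParam A B < 0.144 * (2.036 - cos (π / n) ^ 2)) :
    n ∈ Set.Icc 2 6 := by
  refine ⟨hn, ?_⟩
  by_contra! h7
  have hjorgensen := one_le_commParam_add hA hB (sq_trace_lt_four_of_eq_cos hn hA_trace) hpos
  rw [hA_trace] at hjorgensen
  nlinarith [cos_pi_div_seven_gt, cos_pi_div_seven_le h7]

theorem neg_half_trace_mul_cases {G : Subgroup SL2R} [ProperlyDiscontinuousSMul G ℍ]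
    {A B : SL2R} (hG : -1 ∈ G) (hA : A ∈ G) (hB : B ∈ G) (hpos : 0 < commParam A B)
    (hle : commParam A B ≤ 0.294) (htrace : -1 / 2 < -(A * B : M2R).trace / 2) :
    (∃ q : ℕ, q ∈ Set.Icc 2 6 ∧ -(A * B : M2R).trace / 2 = cos (π / q)) ∨
      -(A * B : M2R).trace / 2 = cos (2 * π / 5) ∨
      -(A * B : M2R).trace / 2 = -cos (2 * π / 5) ∨
      cos (π / 7) ≤ -(A * B : M2R).trace / 2 := by
  rcases lt_or_ge (-(A * B : M2R).trace / 2) 1 with hlt | hge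
  · have hE : ((-1 * (A * B) : SL2R) : M2R) = -(A * B : M2R) := by
      rw [neg_one_mul, Matrix.SpecialLinearGroup.coe_neg, Matrix.SpecialLinearGroup.coe_mul]
    have hEA : commParam (-1 * (A * B) : SL2R) A = commParam A B := by
      rw [hE, commParam_comm, commParam_neg_right, commParam_mul_right, A.det_coe, one_mul]
    have h := half_trace_cases_of_commParam_le hG hA (mul_mem hG (mul_mem hA hB))
    rw [hEA, hE, Matrix.trace_neg] at h
    exact h (by nlinarith) htrace hpos hle
  · exact .inr (.inr (.inr ((cos_le_one _).trans hge)))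

theorem trace_eq_zero_of_primitive {G : Subgroup SL2R} [ProperlyDiscontinuousSMul G ℍ]
    {A B : SL2R} {m n : ℕ} (hG : -1 ∈ G) (hA : A ∈ G) (hB : B ∈ G) (hm : 2 ≤ m) (hn : 2 ≤ n)
    (hA_trace : (A : M2R).trace = 2 * cos (π / m)) (hB_trace : (B : M2R).trace = 2 * cos (π / n))
    (hA_anti : ‖anti A‖ ^ 2 < yamadaConst) (hB_anti : ‖anti B‖ ^ 2 < yamadaConst)
    (hA_im : 0 < (conf A).im) (hB_im : 0 < (conf B).im) (hAB : (A : M2R) * B ≠ B * A) :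
    (A : M2R).trace = 0 ∧ (B : M2R).trace = 0 := by
  have hA_ell := sq_trace_lt_four_iff.mp (sq_trace_lt_four_of_eq_cos hm hA_trace)
  have hB_ell := sq_trace_lt_four_iff.mp (sq_trace_lt_four_of_eq_cos hn hB_trace)
  have hpos := commParam_pos hA_ell hAB
  have htrace := trace_mul_lt hA_ell hB_ell hA_im hB_im
  rw [hA_trace, hB_trace] at htrace
  have hF := commParam_eq_triangleForm hA_trace hB_trace
  have hlt := triangleForm_lt_of_sq_norm_anti_lt hA_trace hB_trace hA_anti hB_anti hA_im hB_im
  have hm6 : m ∈ Set.Icc 2 6 := le_six_of_commParam_lt hA hB hm hA_trace hpos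
    (by linarith [sq_nonneg (cos (π / n))])
  have hn6 : n ∈ Set.Icc 2 6 := le_six_of_commParam_lt hB hA hn hB_trace
    (by rwa [commParam_comm]) (by rw [commParam_comm]; linarith [sq_nonneg (cos (π / m))])
  have hxyc : 0 < -(A * B : M2R).trace / 2 + cos (π / m) * cos (π / n) := by linarith
  have hFpos : 0 < triangleForm (cos (π / m)) (cos (π / n)) (-(A * B : M2R).trace / 2) := by
    linarith
  have hcases := neg_half_trace_mul_cases hG hA hB hpos
    (by linarith [sq_nonneg (cos (π / n)), sq_nonneg (cos (π / m))])
    (neg_half_lt_of_triangleForm_pos (cos_pi_div_nonneg hm) (cos_pi_div_nonneg hn)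
      (sq_cos_pi_div_le hm6) (sq_cos_pi_div_le hn6) hxyc hFpos)
  rcases triangleForm_elimination hm6 hn6 hcases hxyc hFpos hlt with ⟨hx, hy⟩ | ⟨hxy, hsum, hc⟩
  · exact ⟨by rw [hA_trace, hx, mul_zero], by rw [hB_trace, hy, mul_zero]⟩
  · have hF' : triangleForm (cos (π / m)) (cos (π / n)) (-(A * B : M2R).trace / 2) =
        (-(A * B : M2R).trace / 2) ^ 2 - 3 / 4 := by
      rw [triangleForm]
      linear_combination hsum + -(A * B : M2R).trace * hxy
    have hlt' := triangleForm_lt_yamadaConst_mul hA_trace hB_trace hA_anti hB_anti hA_im hB_im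
    have hsharp := yamadaConst_mul_sq_add_lt
      ((sq_im_conf_of_trace_eq hA_trace).trans_lt (add_lt_add_right hA_anti _))
      ((sq_im_conf_of_trace_eq hB_trace).trans_lt (add_lt_add_right hB_anti _)) hxy hsum
    have hc2 : cos (π / 7) ^ 2 ≤ (-(A * B : M2R).trace / 2) ^ 2 := by
      have := cos_pi_div_seven_gt
      gcongr
    linarith

/-! ### Yamada's bound -/

theorem HaveCommonAxis.of_mem_zpowers {A B R S : SL2R} (h : HaveCommonAxis R S)
    (hA : A ∈ Subgroup.zpowers R) (hB : B ∈ Subgroup.zpowers S) : HaveCommonAxis A B := by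
  obtain ⟨X, hX, hX0, hR, hS⟩ := h
  exact ⟨X, hX, hX0, (Subgroup.zpowers_le.mpr hR) hA, (Subgroup.zpowers_le.mpr hS) hB⟩

theorem size_traceless_le_of_four_le_sq_trace {g : SL2R} (hg : 4 ≤ (g : M2R).trace ^ 2) :
    size (traceless g) ≤ 2 * ‖anti g‖ ^ 2 := by
  have him := mt sq_trace_lt_four_iff.mpr hg.not_gt
  rw [size_traceless]
  linarith

theorem haveCommonAxis_of_sq_trace_lt_four {G : Subgroup SL2R} [ProperlyDiscontinuousSMul G ℍ]
    {A B : SL2R} (hG : -1 ∈ G) (hA : A ∈ G) (hB : B ∈ G) (hA_anti : ‖anti A‖ ^ 2 < yamadaConst)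
    (hB_anti : ‖anti B‖ ^ 2 < yamadaConst) (hA_elliptic : (A : M2R).trace ^ 2 < 4)
    (hB_elliptic : (B : M2R).trace ^ 2 < 4) : HaveCommonAxis A B := by
  obtain ⟨m, hm, R, hR, hAR, hR_trace, hR_im, hR_anti⟩ :=
    exists_primitive_rotation_im_pos hG hA hA_elliptic
  obtain ⟨n, hn, S, hS, hBS, hS_trace, hS_im, hS_anti⟩ :=
    exists_primitive_rotation_im_pos hG hB hB_elliptic
  refine HaveCommonAxis.of_mem_zpowers ?_ hAR hBS
  by_cases hRS : (R : M2R) * S = S * R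
  · exact haveCommonAxis_of_commute hRS
  · obtain ⟨hR0, hS0⟩ := trace_eq_zero_of_primitive hG hR hS hm hn hR_trace hS_trace
      ((pow_le_pow_left₀ (norm_nonneg _) hR_anti 2).trans_lt hA_anti)
      ((pow_le_pow_left₀ (norm_nonneg _) hS_anti 2).trans_lt hB_anti) hR_im hS_im hRS
    exact haveCommonAxis_of_trace_eq_zero hR0 hS0 hRS

theorem haveCommonAxis_of_sq_norm_anti_lt {G : Subgroup SL2R} [ProperlyDiscontinuousSMul G ℍ]
    {A B : SL2R} (hG : -1 ∈ G) (hA : A ∈ G) (hB : B ∈ G) (hA_anti : ‖anti A‖ ^ 2 < yamadaConst)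
    (hB_anti : ‖anti B‖ ^ 2 < yamadaConst) : HaveCommonAxis A B := by
  by_cases hAB : (A : M2R) * B = B * A
  · exact haveCommonAxis_of_commute hAB
  have hA_le := (hA_anti.trans yamadaConst_lt).le
  have hB_le := (hB_anti.trans yamadaConst_lt).le
  rcases lt_or_ge ((A : M2R).trace ^ 2) 4 with hA_elliptic | hA_hyp
  · rcases lt_or_ge ((B : M2R).trace ^ 2) 4 with hB_elliptic | hB_hyp
    · exact haveCommonAxis_of_sq_trace_lt_four hG hA hB hA_anti hB_anti hA_elliptic hB_elliptic
    · exact haveCommonAxis_of_size_traceless_le hA hB hB hA_le hB_le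
        (fun h0 ↦ hAB (mul_comm_of_traceless_eq_zero h0 _).symm)
        (by linarith [size_traceless_le_of_four_le_sq_trace hB_hyp])
  · exact haveCommonAxis_of_size_traceless_le hA hB hA hA_le hB_le
      (fun h0 ↦ hAB (mul_comm_of_traceless_eq_zero h0 _))
      (by linarith [size_traceless_le_of_four_le_sq_trace hA_hyp])

theorem dist_smul_smul_I (g h : SL2R) :
    dist (g • h • I) (h • I) = 2 * arsinh ‖anti (h⁻¹ * g * h : SL2R)‖ := by
  rw [← dist_smul_I_I, ← dist_smul h⁻¹ (g • _), inv_smul_smul, mul_smul, mul_smul]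

theorem sq_norm_anti_lt_of_dist_lt {g h : SL2R} {d : ℝ}
    (hd : dist (g • h • I) (h • I) < 2 * arsinh √d) :
    ‖anti (h⁻¹ * g * h : SL2R)‖ ^ 2 < d := by
  rw [dist_smul_smul_I, mul_lt_mul_iff_right₀ two_pos, arsinh_lt_arsinh] at hd
  exact (Real.lt_sqrt (norm_nonneg _)).mp hd

theorem le_max_dist_smul_of_not_haveCommonAxis {Γ : Subgroup SL2R} [ProperlyDiscontinuousSMul Γ ℍ]
    {A B : SL2R} (hA : A ∈ Γ) (hB : B ∈ Γ) (hAB : ¬HaveCommonAxis A B) (z : ℍ) :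
    2 * arsinh √yamadaConst ≤ max (dist (A • z) z) (dist (B • z) z) := by
  obtain ⟨h, rfl⟩ : ∃ h : SL2R, h • I = z := ⟨_, toSL2R_smul_I z⟩
  by_contra! hlt
  rw [max_lt_iff] at hlt
  have := properlyDiscontinuousSMul_conj (α := ℍ) Γ h⁻¹
  have := properlyDiscontinuousSMul_adjoinNegOne (MulAut.conj h⁻¹ • Γ)
  have hmem : ∀ g ∈ Γ, h⁻¹ * g * h ∈ adjoinNegOne (MulAut.conj h⁻¹ • Γ) := fun g hg ↦
    le_adjoinNegOne _ ⟨g, hg, by simp⟩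
  refine hAB ?_
  simpa [mul_assoc] using (haveCommonAxis_of_sq_norm_anti_lt (neg_one_mem_adjoinNegOne _)
    (hmem A hA) (hmem B hB) (sq_norm_anti_lt_of_dist_lt hlt.1)
    (sq_norm_anti_lt_of_dist_lt hlt.2)).conj h

/-- Yamada's theorem: the Margulis constant for Fuchsian groups. -/
theorem margulis_fuchsian (A B : SL2R)
    (hd : IsDiscreteSubgroupR (Subgroup.closure {A, B}))
    (hne : IsNonelementaryR (Subgroup.closure {A, B})) :
    ∀ z : UpperHalfPlane,
      max (dist (A • z) z) (dist (B • z) z) ≥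
        2 * Real.arsinh (Real.sqrt
          ((2 * Real.cos (2 * π / 7) - 1) / (8 * Real.cos (π / 7) + 7))) := by
  have := properlyDiscontinuousSMul_of_isDiscreteSubgroupR hd
  exact le_max_dist_smul_of_not_haveCommonAxis (Subgroup.subset_closure (Set.mem_insert A {B}))
    (Subgroup.subset_closure (Set.mem_insert_of_mem A rfl))
    (not_haveCommonAxis_of_isNonelementaryR hne)

end
end
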